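/- Let Γ be an unbalanced signed bipartite graph with partite sets of sizes r and s (3 ≤ r ≤ s) containing no negative 4-cycle. Then ρ(Γ) ≤ sqrt( ((r−1)(s−1)+2 + sqrt( ((r−1)(s−1)+2)² − 4(2s−3)(2r−3) )) / 2 ), with equality if and only if Γ is switching isomorphic to Γ_{r,s}. -/

import Mathlib

open Matrix Finset

structure SignedGraph (V : Type*) where
  G : SimpleGraph V
  sign : V → V → ℝ
  sign_symm : ∀ u v, sign u v = sign v u
  sign_edge : ∀ u v, G.Adj u v → sign u v = 1 ∨ sign u v = -1
  sign_nonedge : ∀ u v, ¬ G.Adj u v → sign u v = 0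

def SignedGraph.adjMatrix {V : Type*} (Γ : SignedGraph V) : Matrix V V ℝ :=
  Matrix.of fun u v => Γ.sign u v

def SignedGraph.edgeSign {V : Type*} (Γ : SignedGraph V) : Sym2 V → ℝ :=
  Sym2.lift ⟨Γ.sign, Γ.sign_symm⟩

def SignedGraph.IsNegCycle {V : Type*} (Γ : SignedGraph V) {u : V}
    (w : Γ.G.Walk u u) : Prop :=
  w.IsCycle ∧ (w.edges.map Γ.edgeSign).prod = -1

def SignedGraph.Unbalanced {V : Type*} (Γ : SignedGraph V) : Prop :=
  ∃ (u : V) (w : Γ.G.Walk u u), Γ.IsNegCycle w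

/-- Sign of the edge between the `x`-th vertex of the `r`-side and the `y`-th vertex of the
`s`-side of `Γ_{r,s}`: index `r-1` on the left is `u₁`, index `0` on the left is `u`,
index `s-1` on the right is `v₁`, index `0` on the right is `v`. -/
def gammaSign (r s : ℕ) (x : Fin r) (y : Fin s) : ℝ :=
  if (x : ℕ) = r - 1 then (if (y : ℕ) = 0 then 1 else if (y : ℕ) = s - 1 then -1 else 0)
  else if (x : ℕ) = 0 then (if (y : ℕ) = 0 then 0 else 1)
  else if (y : ℕ) = s - 1 then 0 else 1

/-- The adjacency matrix of the signed graph `Γ_{r,s}`. -/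
def gammaMatrix (r s : ℕ) : Matrix (Fin r ⊕ Fin s) (Fin r ⊕ Fin s) ℝ :=
  Matrix.of fun a b =>
    match a, b with
    | Sum.inl x, Sum.inr y => gammaSign r s x y
    | Sum.inr y, Sum.inl x => gammaSign r s x y
    | _, _ => 0

/-!
A shortest negative closed walk of `Γ` is a hexagon or has length at least eight. Switch so that an
eigenvector of the positive eigenvalue `μ` becomes nonnegative; its two halves `x`, `y` then form a
singular pair of the biadjacency matrix `N`.

For a hexagon, the absence of negative 4-cycles leaves no vertex adjacent to three of its vertices.
Subtracting the least weights of `x` and `y` on the hexagon therefore bounds `xᵀ N y` by the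
bilinear form of the rank-two biadjacency matrix of `Γ_{r,s}`, with the ends of its negative edge
placed at the two minimisers. The square of the largest singular value of that matrix is the larger
root of `t² - ((r - 1) (s - 1) + 2) t + (2 r - 3) (2 s - 3)`, and tightness of the estimates forces
the entries of `N`.

On a longer walk, two vertices at distance four have no common neighbour, since otherwise a shorter
negative closed walk would appear. Hence `N` has so few nonzero entries that Cauchy-Schwarz already
gives a strict inequality.
-/

/-! ### The extremal value -/

/-- The claimed spectral radius of `Γ_{r,s}`, the right-hand side of the Turán bound. -/
noncomputable def gammaIndex (r s : ℝ) : ℝ :=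
  √((((r - 1) * (s - 1) + 2) +
    √(((r - 1) * (s - 1) + 2) ^ 2 - 4 * (2 * r - 3) * (2 * s - 3))) / 2)

/-- The quadratic whose roots are the nonzero squared eigenvalues of `Γ_{r,s}`. -/
def gammaPoly (r s t : ℝ) : ℝ :=
  t ^ 2 - ((r - 1) * (s - 1) + 2) * t + (2 * r - 3) * (2 * s - 3)

section gammaIndex

variable {r s t : ℝ}

lemma gammaIndex_comm (r s : ℝ) : gammaIndex s r = gammaIndex r s := by
  unfold gammaIndex
  congr 3 <;> ring_nf

lemma le_gammaIndex_sq (h : gammaPoly r s t ≤ 0) : t ≤ gammaIndex r s ^ 2 := by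
  unfold gammaPoly at h
  rw [gammaIndex, Real.sq_sqrt']
  have : 2 * t - ((r - 1) * (s - 1) + 2) ≤
      √(((r - 1) * (s - 1) + 2) ^ 2 - 4 * (2 * r - 3) * (2 * s - 3)) :=
    Real.le_sqrt_of_sq_le (by linarith)
  exact le_max_of_le_left (by linarith)

lemma lt_gammaIndex_sq (h : gammaPoly r s t < 0) : t < gammaIndex r s ^ 2 := by
  unfold gammaPoly at h
  rw [gammaIndex, Real.sq_sqrt']
  have : 2 * t - ((r - 1) * (s - 1) + 2) <
      √(((r - 1) * (s - 1) + 2) ^ 2 - 4 * (2 * r - 3) * (2 * s - 3)) :=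
    Real.lt_sqrt_of_sq_lt (by linarith)
  exact lt_max_of_lt_left (by linarith)

lemma le_two_mul_gammaIndex_sq (hr : 3 ≤ r) :
    (s - 1) * (2 * r - 3) ≤ 2 * gammaIndex r s ^ 2 := by
  have : gammaPoly r s ((s - 1) * (2 * r - 3) / 2) ≤ 0 := by
    have : gammaPoly r s ((s - 1) * (2 * r - 3) / 2) = -((2 * r - 3) * (s - 3) ^ 2 / 4) := by
      unfold gammaPoly; ring
    rw [this, neg_nonpos]
    have : 0 ≤ 2 * r - 3 := by linarith
    positivity
  linarith [le_gammaIndex_sq this]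

lemma gammaIndex_sq_pos (hr : 3 ≤ r) (hs : 3 ≤ s) : 0 < gammaIndex r s ^ 2 := by
  nlinarith [le_two_mul_gammaIndex_sq (s := s) hr]

lemma gammaIndex_pos (hr : 3 ≤ r) (hs : 3 ≤ s) : 0 < gammaIndex r s :=
  (Real.sqrt_nonneg _).lt_of_ne' (sq_pos_iff.1 (gammaIndex_sq_pos hr hs))

lemma gammaPoly_gammaIndex_sq (hr : 3 ≤ r) (hs : 3 ≤ s) :
    gammaPoly r s (gammaIndex r s ^ 2) = 0 := by
  have hdisc : 0 ≤ ((r - 1) * (s - 1) + 2) ^ 2 - 4 * (2 * r - 3) * (2 * s - 3) := by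
    nlinarith [sq_nonneg ((r - 1) * (s - 1) + 2 - (s - 1) * (2 * r - 3)),
      mul_nonneg (by linarith : 0 ≤ 2 * r - 3) (sq_nonneg (s - 3))]
  have hm : 0 ≤ (r - 1) * (s - 1) := mul_nonneg (by linarith) (by linarith)
  rw [gammaIndex, Real.sq_sqrt (by positivity), gammaPoly]
  linear_combination Real.sq_sqrt hdisc / 4

lemma binary_form_nonneg {a b c : ℝ} (ha : 0 ≤ a) (hc : 0 ≤ c) (h : b ^ 2 ≤ a * c) (p q : ℝ) :
    0 ≤ a * p ^ 2 - 2 * b * (p * q) + c * q ^ 2 := by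
  obtain rfl | ha := ha.eq_or_lt
  · obtain rfl : b = 0 := by simpa using h.antisymm (by simpa using sq_nonneg b)
    simpa using mul_nonneg hc (sq_nonneg q)
  · refine nonneg_of_mul_nonneg_right ?_ ha
    nlinarith [sq_nonneg (a * p - b * q), mul_nonneg (sub_nonneg.2 h) (sq_nonneg q)]

-- The difference of the two sides is a binary form of discriminant `-4 (2r - 3) gammaPoly = 0`.
lemma gamma_form_le_gammaIndex_sq_mul (hr : 3 ≤ r) (hs : 3 ≤ s) (p w : ℝ) :
    (2 * r - 3) * ((s - 1) * p ^ 2 - 2 * (p * w) + 2 * w ^ 2) ≤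
      gammaIndex r s ^ 2 * (2 * p ^ 2 - 2 * (p * w) + (r - 1) * w ^ 2) := by
  have hroot := gammaPoly_gammaIndex_sq hr hs
  have hleft := le_two_mul_gammaIndex_sq (s := s) hr
  have hright := le_two_mul_gammaIndex_sq (s := r) hs
  rw [gammaIndex_comm] at hright
  unfold gammaPoly at hroot
  set t := gammaIndex r s ^ 2
  have hcoeff : 0 ≤ (r - 1) * t - 2 * (2 * r - 3) := by
    nlinarith [mul_le_mul_of_nonneg_left hright (by linarith : 0 ≤ r - 1),
      mul_nonneg (sq_nonneg (r - 1)) (sub_nonneg.2 hs),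
      mul_nonneg (sub_nonneg.2 hr) (by linarith : 0 ≤ 3 * r - 5)]
  have hform := binary_form_nonneg (a := 2 * t - (s - 1) * (2 * r - 3)) (b := t - (2 * r - 3))
    (c := (r - 1) * t - 2 * (2 * r - 3)) (by linarith) hcoeff
    (by linear_combination -(2 * r - 3) * hroot) p w
  linarith

-- The matrix here is that of `BᵀB` restricted to the row space of the block `B` of `Γ_{r,s}`.
lemma exists_gammaIndex_sq_eigenvector (hr : 3 ≤ r) (hs : 3 ≤ s) :
    ∃ a b : ℝ, (a ≠ 0 ∨ b ≠ 0) ∧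
      ((r - 1) * (s - 1) - 1) * a + (r - 3) * b = gammaIndex r s ^ 2 * a ∧
      (3 - s) * a + 3 * b = gammaIndex r s ^ 2 * b := by
  have hroot := gammaPoly_gammaIndex_sq hr hs
  unfold gammaPoly at hroot
  set t := gammaIndex r s ^ 2
  have hdet : !![(r - 1) * (s - 1) - 1 - t, r - 3; 3 - s, 3 - t].det = 0 := by
    rw [det_fin_two_of]
    linear_combination hroot
  obtain ⟨c, hc, hker⟩ := exists_mulVec_eq_zero_iff.2 hdet
  have hker0 : ((r - 1) * (s - 1) - 1 - t) * c 0 + (r - 3) * c 1 = 0 := by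
    simpa [mulVec, dotProduct] using congrFun hker 0
  have hker1 : (3 - s) * c 0 + (3 - t) * c 1 = 0 := by
    simpa [mulVec, dotProduct] using congrFun hker 1
  refine ⟨c 0, c 1, ?_, by linarith, by linarith⟩
  by_contra! h
  exact hc (funext fun k => by fin_cases k; exacts [h.1, h.2])

end gammaIndex

/-! ### The rank-two matrix of `Γ_{r,s}` -/

section Gram

variable {I J : Type*} [Fintype I] [Fintype J]

lemma smul_sub_smul_dotProduct_self (a b : ℝ) (v z : I → ℝ) :
    (a • v - b • z) ⬝ᵥ (a • v - b • z) =
      a ^ 2 * (v ⬝ᵥ v) - 2 * a * b * (v ⬝ᵥ z) + b ^ 2 * (z ⬝ᵥ z) := by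
  simp only [sub_dotProduct, dotProduct_sub, smul_dotProduct, dotProduct_smul, smul_eq_mul,
    dotProduct_comm z v]
  ring

lemma gram_form_le {u w : I → ℝ} (h : 0 < (u ⬝ᵥ u) * (w ⬝ᵥ w) - (u ⬝ᵥ w) ^ 2) (x : I → ℝ) :
    (w ⬝ᵥ w) * (u ⬝ᵥ x) ^ 2 - 2 * (u ⬝ᵥ w) * (u ⬝ᵥ x) * (w ⬝ᵥ x) + (u ⬝ᵥ u) * (w ⬝ᵥ x) ^ 2 ≤
      ((u ⬝ᵥ u) * (w ⬝ᵥ w) - (u ⬝ᵥ w) ^ 2) * (x ⬝ᵥ x) := by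
  set D := (u ⬝ᵥ u) * (w ⬝ᵥ w) - (u ⬝ᵥ w) ^ 2 with hD
  -- `D` times the component of `x` orthogonal to `u` and `w`
  set p := D • x - ((w ⬝ᵥ w) * (u ⬝ᵥ x) - (u ⬝ᵥ w) * (w ⬝ᵥ x)) • u -
    ((u ⬝ᵥ u) * (w ⬝ᵥ x) - (u ⬝ᵥ w) * (u ⬝ᵥ x)) • w with hp
  have hexp : p ⬝ᵥ p = D * (D * (x ⬝ᵥ x) - ((w ⬝ᵥ w) * (u ⬝ᵥ x) ^ 2 -
      2 * (u ⬝ᵥ w) * (u ⬝ᵥ x) * (w ⬝ᵥ x) + (u ⬝ᵥ u) * (w ⬝ᵥ x) ^ 2)) := by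
    simp only [hp, sub_dotProduct, dotProduct_sub, smul_dotProduct, dotProduct_smul, smul_eq_mul,
      dotProduct_comm x u, dotProduct_comm x w, dotProduct_comm w u]
    rw [hD]; ring
  have hp0 : 0 ≤ p ⬝ᵥ p := sum_nonneg fun i _ => mul_self_nonneg (p i)
  exact sub_nonneg.1 (nonneg_of_mul_nonneg_right (hexp ▸ hp0) h)

lemma two_mul_form_add_le {B : Matrix I J ℝ} {σ : ℝ} {x : I → ℝ}
    (h : (x ᵥ* B) ⬝ᵥ (x ᵥ* B) ≤ σ ^ 2 * (x ⬝ᵥ x)) (y : J → ℝ) :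
    2 * σ * (x ⬝ᵥ B *ᵥ y) + (σ • y - x ᵥ* B) ⬝ᵥ (σ • y - x ᵥ* B) ≤
      σ ^ 2 * (x ⬝ᵥ x + y ⬝ᵥ y) := by
  simp only [sub_dotProduct, dotProduct_sub, smul_dotProduct, dotProduct_smul, smul_eq_mul,
    dotProduct_mulVec, dotProduct_comm y (x ᵥ* B)]
  linarith

lemma dotProduct_mulVec_eq (N : Matrix I J ℝ) (x : I → ℝ) (y : J → ℝ) :
    x ⬝ᵥ N *ᵥ y = ∑ i, ∑ j, x i * N i j * y j := by
  simp [dotProduct, mulVec, mul_sum, mul_assoc]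

end Gram

/-- `x` and `y` are entrywise nonnegative left and right singular vectors of `N` for the singular
value `σ`. -/
structure IsNonnegSingularPair {I J : Type*} [Fintype I] [Fintype J] (N : Matrix I J ℝ) (σ : ℝ)
    (x : I → ℝ) (y : J → ℝ) : Prop where
  mulVec_eq : N *ᵥ y = σ • x
  vecMul_eq : x ᵥ* N = σ • y
  left_nonneg : 0 ≤ x
  right_nonneg : 0 ≤ y
  left_ne_zero : x ≠ 0
  right_ne_zero : y ≠ 0

namespace IsNonnegSingularPair

variable {I J : Type*} [Fintype I] [Fintype J] {N : Matrix I J ℝ} {σ : ℝ} {x : I → ℝ} {y : J → ℝ}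

lemma transpose (h : IsNonnegSingularPair N σ x y) : IsNonnegSingularPair Nᵀ σ y x where
  mulVec_eq := by rw [mulVec_transpose, h.vecMul_eq]
  vecMul_eq := by rw [vecMul_transpose, h.mulVec_eq]
  left_nonneg := h.right_nonneg
  right_nonneg := h.left_nonneg
  left_ne_zero := h.right_ne_zero
  right_ne_zero := h.left_ne_zero

lemma form_eq_left (h : IsNonnegSingularPair N σ x y) : x ⬝ᵥ N *ᵥ y = σ * (x ⬝ᵥ x) := by
  rw [h.mulVec_eq, dotProduct_smul, smul_eq_mul]

lemma form_eq_right (h : IsNonnegSingularPair N σ x y) : x ⬝ᵥ N *ᵥ y = σ * (y ⬝ᵥ y) := by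
  rw [dotProduct_mulVec, h.vecMul_eq, smul_dotProduct, smul_eq_mul]

lemma left_dotProduct_self_pos (h : IsNonnegSingularPair N σ x y) : 0 < x ⬝ᵥ x :=
  (sum_nonneg fun i _ => mul_self_nonneg (x i)).lt_of_ne' <|
    mt dotProduct_self_eq_zero.1 h.left_ne_zero

end IsNonnegSingularPair

section gammaBlock

variable {I J : Type*} [DecidableEq I] [DecidableEq J]

/-- The block of the adjacency matrix of `Γ_{r,s}` with `α, β` the ends of the negative edge, `α'`
the vertex joined to `β` and `β'` the vertex joined to `α`, so that `α'β'` is the deleted edge. -/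
def gammaBlock (α α' : I) (β β' : J) : Matrix I J ℝ :=
  vecMulVec (1 - Pi.single α 1) (1 - Pi.single β 1) -
    vecMulVec (Pi.single α' 1 - Pi.single α 1) (Pi.single β' 1 - Pi.single β 1)

lemma gammaBlock_transpose (α α' : I) (β β' : J) :
    (gammaBlock α α' β β')ᵀ = gammaBlock β β' α α' := by
  simp only [gammaBlock, transpose_sub, transpose_vecMulVec]

lemma gammaBlock_apply {α α' : I} {β β' : J} (hα : α ≠ α') (hβ : β ≠ β') (i : I) (j : J) :
    gammaBlock α α' β β' i j =
      if i = α then (if j = β then -1 else if j = β' then 1 else 0)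
      else if i = α' then (if j = β' then 0 else 1)
      else if j = β then 0 else 1 := by
  simp only [gammaBlock, Matrix.sub_apply, vecMulVec_apply, Pi.sub_apply, Pi.one_apply,
    Pi.single_apply]
  split_ifs <;> simp_all

lemma vecMul_gammaBlock [Fintype I] (x : I → ℝ) (α α' : I) (β β' : J) :
    x ᵥ* gammaBlock α α' β β' =
      (∑ i, x i - x α) • (1 - Pi.single β 1) - (x α' - x α) • (Pi.single β' 1 - Pi.single β 1) := by
  simp [gammaBlock, vecMul_sub, vecMul_vecMulVec, dotProduct_sub, dotProduct_one]

lemma gammaBlock_mulVec [Fintype J] (α α' : I) (β β' : J) (y : J → ℝ) :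
    gammaBlock α α' β β' *ᵥ y =
      (∑ j, y j - y β) • (1 - Pi.single α 1) - (y β' - y β) • (Pi.single α' 1 - Pi.single α 1) := by
  rw [← gammaBlock_transpose β β', mulVec_transpose, vecMul_gammaBlock]

lemma left_eq_add_of_gammaBlock_mulVec [Fintype J] {α α' : I} {β β' : J} {σ : ℝ} (hσ : σ ≠ 0)
    (hα : α ≠ α') {x : I → ℝ} {y : J → ℝ} (h : gammaBlock α α' β β' *ᵥ y = σ • x) {i : I}
    (hi : i ≠ α) (hi' : i ≠ α') : x i = x α' + x α := by
  have hx := congrFun h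
  simp only [gammaBlock_mulVec, Pi.sub_apply, Pi.smul_apply, Pi.one_apply, Pi.single_apply,
    smul_eq_mul] at hx
  have hxi := hx i
  have hxα := hx α
  have hxα' := hx α'
  simp only [hα, hα.symm, hi, hi', if_true, if_false] at hxi hxα hxα'
  refine mul_left_cancel₀ hσ ?_
  linear_combination -hxi + hxα + hxα'

variable [Fintype I] [Fintype J]

lemma dotProduct_gammaBlock_mulVec (x : I → ℝ) (y : J → ℝ) (α α' : I) (β β' : J) :
    x ⬝ᵥ gammaBlock α α' β β' *ᵥ y =
      (∑ i, x i - x α) * (∑ j, y j - y β) - (x α' - x α) * (y β' - y β) := by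
  simp only [gammaBlock_mulVec, dotProduct_sub, dotProduct_smul, dotProduct_one, dotProduct_single,
    mul_one, smul_eq_mul]
  ring

variable {α α' : I} {β β' : J}

lemma one_sub_single_dotProduct_self (α : I) :
    (1 - Pi.single α 1 : I → ℝ) ⬝ᵥ (1 - Pi.single α 1) = Fintype.card I - 1 := by
  simp [dotProduct_sub, dotProduct_one]

lemma one_sub_single_dotProduct_single_sub (hα : α ≠ α') :
    (1 - Pi.single α 1 : I → ℝ) ⬝ᵥ (Pi.single α' 1 - Pi.single α 1) = 1 := by
  simp [dotProduct_sub, hα.symm]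

lemma single_sub_dotProduct_self (hα : α ≠ α') :
    (Pi.single α' 1 - Pi.single α 1 : I → ℝ) ⬝ᵥ (Pi.single α' 1 - Pi.single α 1) = 2 := by
  norm_num [dotProduct_sub, hα, hα.symm]

lemma vecMul_gammaBlock_dotProduct_self_le (hα : α ≠ α') (hβ : β ≠ β')
    (hI : 3 ≤ Fintype.card I) (hJ : 3 ≤ Fintype.card J) (x : I → ℝ) :
    (x ᵥ* gammaBlock α α' β β') ⬝ᵥ (x ᵥ* gammaBlock α α' β β') ≤
      gammaIndex (Fintype.card I) (Fintype.card J) ^ 2 * (x ⬝ᵥ x) := by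
  have hr : (3 : ℝ) ≤ Fintype.card I := by exact_mod_cast hI
  have hs : (3 : ℝ) ≤ Fintype.card J := by exact_mod_cast hJ
  have hform := gamma_form_le_gammaIndex_sq_mul hr hs (∑ i, x i - x α) (x α' - x α)
  have hgram := gram_form_le (u := 1 - Pi.single α 1) (w := Pi.single α' 1 - Pi.single α 1)
    (by simp only [one_sub_single_dotProduct_self, one_sub_single_dotProduct_single_sub hα,
          single_sub_dotProduct_self hα]; linarith) x
  simp only [one_sub_single_dotProduct_self, one_sub_single_dotProduct_single_sub hα,
    single_sub_dotProduct_self hα, sub_dotProduct _ _ x, one_dotProduct, single_dotProduct,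
    one_mul] at hgram
  rw [vecMul_gammaBlock, smul_sub_smul_dotProduct_self, one_sub_single_dotProduct_self,
    one_sub_single_dotProduct_single_sub hβ, single_sub_dotProduct_self hβ]
  refine le_of_mul_le_mul_left ?_ (by linarith : 0 < 2 * (Fintype.card I : ℝ) - 3)
  linarith [mul_le_mul_of_nonneg_left hgram
    (sq_nonneg (gammaIndex (Fintype.card I) (Fintype.card J)))]

lemma two_mul_gammaBlock_form_le (hα : α ≠ α') (hβ : β ≠ β')
    (hI : 3 ≤ Fintype.card I) (hJ : 3 ≤ Fintype.card J) (x : I → ℝ) (y : J → ℝ) :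
    2 * (x ⬝ᵥ gammaBlock α α' β β' *ᵥ y) ≤
      gammaIndex (Fintype.card I) (Fintype.card J) * (x ⬝ᵥ x + y ⬝ᵥ y) := by
  have hpos : 0 < gammaIndex (Fintype.card I) (Fintype.card J) :=
    gammaIndex_pos (by exact_mod_cast hI) (by exact_mod_cast hJ)
  have h := two_mul_form_add_le (vecMul_gammaBlock_dotProduct_self_le hα hβ hI hJ x) y
  set σ := gammaIndex (Fintype.card I) (Fintype.card J)
  set d := σ • y - x ᵥ* gammaBlock α α' β β'
  have hd : 0 ≤ d ⬝ᵥ d := sum_nonneg fun j _ => mul_self_nonneg (d j)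
  refine le_of_mul_le_mul_left ?_ hpos
  linarith

lemma vecMul_gammaBlock_of_form_eq (hα : α ≠ α') (hβ : β ≠ β')
    (hI : 3 ≤ Fintype.card I) (hJ : 3 ≤ Fintype.card J) {x : I → ℝ} {y : J → ℝ}
    (h : 2 * (x ⬝ᵥ gammaBlock α α' β β' *ᵥ y) =
      gammaIndex (Fintype.card I) (Fintype.card J) * (x ⬝ᵥ x + y ⬝ᵥ y)) :
    x ᵥ* gammaBlock α α' β β' = gammaIndex (Fintype.card I) (Fintype.card J) • y := by
  have hle := two_mul_form_add_le (vecMul_gammaBlock_dotProduct_self_le hα hβ hI hJ x) y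
  set σ := gammaIndex (Fintype.card I) (Fintype.card J)
  refine (sub_eq_zero.1 (dotProduct_self_eq_zero.1 (le_antisymm ?_ ?_))).symm
  · linear_combination hle - σ * h
  · exact sum_nonneg fun j _ => mul_self_nonneg _

lemma gammaBlock_mulVec_of_form_eq (hα : α ≠ α') (hβ : β ≠ β')
    (hI : 3 ≤ Fintype.card I) (hJ : 3 ≤ Fintype.card J) {x : I → ℝ} {y : J → ℝ}
    (h : 2 * (x ⬝ᵥ gammaBlock α α' β β' *ᵥ y) =
      gammaIndex (Fintype.card I) (Fintype.card J) * (x ⬝ᵥ x + y ⬝ᵥ y)) :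
    gammaBlock α α' β β' *ᵥ y = gammaIndex (Fintype.card I) (Fintype.card J) • x := by
  rw [← gammaBlock_transpose β β', mulVec_transpose, gammaIndex_comm]
  refine vecMul_gammaBlock_of_form_eq hβ hα hJ hI ?_
  rw [gammaIndex_comm, add_comm (y ⬝ᵥ y), ← h, dotProduct_gammaBlock_mulVec,
    dotProduct_gammaBlock_mulVec]
  ring

lemma IsNonnegSingularPair.left_pos_of_gammaBlock {σ : ℝ} (hσ : 0 < σ) (hα : α ≠ α') (hβ : β ≠ β')
    {x : I → ℝ} {y : J → ℝ} (h : IsNonnegSingularPair (gammaBlock α α' β β') σ x y)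
    {i : I} (hi : i ≠ α) : 0 < x i := by
  have hxα_nonneg : 0 ≤ x α := h.left_nonneg α
  have hle : x α' ≤ x i := by
    obtain rfl | hi' := eq_or_ne i α'
    · exact le_rfl
    · rw [left_eq_add_of_gammaBlock_mulVec hσ.ne' hα h.mulVec_eq hi hi']
      exact le_add_of_nonneg_right hxα_nonneg
  have hx := congrFun h.mulVec_eq
  have hyβ := congrFun h.vecMul_eq β
  simp only [gammaBlock_mulVec, vecMul_gammaBlock, Pi.sub_apply, Pi.smul_apply, Pi.one_apply,
    Pi.single_apply, hβ, smul_eq_mul, if_true, if_false] at hx hyβ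
  have hxα := hx α
  have hxα' := hx α'
  simp only [hα, hα.symm, if_true, if_false] at hxα hxα'
  refine lt_of_lt_of_le ((h.left_nonneg α').lt_of_ne' fun (h0 : x α' = 0) => ?_) hle
  have hyβ_nonneg : 0 ≤ σ * y β := mul_nonneg hσ.le (h.right_nonneg β)
  have hxα0 : x α = 0 := by linarith
  have hyβ0 : y β = 0 := by simpa [hσ.ne'] using (show σ * y β = 0 by linarith)
  have hsum : ∑ j, y j = 0 := by
    rw [hxα0] at hxα
    rw [h0] at hxα'
    linarith
  have hzero := (sum_eq_zero_iff_of_nonneg fun j _ => h.right_nonneg j).1 hsum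
  exact h.right_ne_zero (funext fun j => hzero j (mem_univ j))

lemma exists_gammaBlock_singular (hα : α ≠ α') (hβ : β ≠ β')
    (hI : 3 ≤ Fintype.card I) (hJ : 3 ≤ Fintype.card J) :
    ∃ (x : I → ℝ) (y : J → ℝ), y ≠ 0 ∧
      gammaBlock α α' β β' *ᵥ y = gammaIndex (Fintype.card I) (Fintype.card J) • x ∧
      x ᵥ* gammaBlock α α' β β' = gammaIndex (Fintype.card I) (Fintype.card J) • y := by
  have hr : (3 : ℝ) ≤ Fintype.card I := by exact_mod_cast hI
  have hs : (3 : ℝ) ≤ Fintype.card J := by exact_mod_cast hJ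
  have hσ := gammaIndex_pos hr hs
  obtain ⟨a, b, hab, ha, hb⟩ := exists_gammaIndex_sq_eigenvector hr hs
  set r : ℝ := (Fintype.card I : ℝ) with hr_def
  set s : ℝ := (Fintype.card J : ℝ) with hs_def
  set σ := gammaIndex r s
  set y : J → ℝ := a • (1 - Pi.single β 1) + b • (Pi.single β' 1 - Pi.single β 1)
  have hysum : ∑ j, y j = a * (s - 1) := by simp [y, sum_add_distrib, ← mul_sum, hs_def]
  have hyβ : y β = -b := by simp [y, hβ]
  have hyβ' : y β' = a + b := by simp [y, hβ.symm]
  have hBy := gammaBlock_mulVec α α' β β' y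
  rw [hysum, hyβ, hyβ'] at hBy
  set z := gammaBlock α α' β β' *ᵥ y
  have hzsum : ∑ i, z i = (a * (s - 1) - -b) * (r - 1) := by simp [hBy, ← mul_sum, hr_def]
  have hzα : z α = a + b - -b := by simp [hBy, hα]
  have hzα' : z α' = a * (s - 1) - -b - (a + b - -b) := by simp [hBy, hα.symm]
  refine ⟨σ⁻¹ • z, y, fun hy0 => ?_, by rw [smul_inv_smul₀ hσ.ne'], ?_⟩
  · have hb0 : b = 0 := by simpa [hyβ] using congrFun hy0 β
    have ha0 : a = 0 := by simpa [hyβ', hb0] using congrFun hy0 β'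
    exact hab.elim (· ha0) (· hb0)
  · rw [smul_vecMul, vecMul_gammaBlock, hzsum, hzα, hzα', inv_smul_eq_iff₀ hσ.ne', smul_smul,
      ← sq, smul_add, smul_smul, smul_smul, sub_eq_add_neg, ← neg_smul]
    congr 2 <;> linarith

end gammaBlock

/-! ### Negative hexagons -/

section Injective

variable {ι I : Type*} [Fintype ι] {a : ι → I} {f : I → ℝ}

lemma sum_comp_le_sum_of_injective [Fintype I] (ha : Function.Injective a) (hf : 0 ≤ f) :
    ∑ k, f (a k) ≤ ∑ i, f i := by
  simpa using sum_le_univ_sum_of_nonneg (s := univ.map ⟨a, ha⟩) hf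

lemma smul_sum_single_le [DecidableEq I] (ha : Function.Injective a) (hf : 0 ≤ f) {c : ℝ}
    (hc : ∀ k, c ≤ f (a k)) : c • ∑ k, Pi.single (a k) 1 ≤ f := by
  classical
  intro i
  simp only [Pi.smul_apply, Finset.sum_apply, Pi.single_apply, smul_eq_mul]
  by_cases hi : i ∈ Set.range a
  · obtain ⟨k, rfl⟩ := hi
    simpa [ha.eq_iff] using hc k
  · have hi' : ∀ k, i ≠ a k := fun k hk => hi ⟨k, hk.symm⟩
    simpa [hi'] using hf i

end Injective

/-- A matrix all of whose entries are `0`, `1` or `-1`. -/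
def IsSignMatrix {I J : Type*} (N : Matrix I J ℝ) : Prop :=
  ∀ i j, N i j = 0 ∨ N i j = 1 ∨ N i j = -1

/-- The rows `a` and columns `b` span a negative hexagon of a bipartite signed graph without
negative 4-cycles: the edges `a k, b l` with `k ≠ l` form a negative 6-cycle, and no vertex is
adjacent to all three hexagon vertices on the other side. -/
structure IsNegHexagon {I J : Type*} (N : Matrix I J ℝ) (a : Fin 3 → I) (b : Fin 3 → J) :
    Prop where
  prod_eq : ∏ k, N (a k) (b (k + 1)) * N (a k) (b (k + 2)) = -1
  exists_right_eq_zero : ∀ i, ∃ k, N i (b k) = 0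
  exists_left_eq_zero : ∀ j, ∃ k, N (a k) j = 0

section IsSignMatrix

variable {I J : Type*} {N : Matrix I J ℝ}

lemma IsSignMatrix.transpose (hN : IsSignMatrix N) : IsSignMatrix Nᵀ := fun j i => hN i j

lemma IsSignMatrix.abs_le_one (hN : IsSignMatrix N) (i : I) (j : J) : |N i j| ≤ 1 := by
  rcases hN i j with h | h | h <;> norm_num [h]

lemma IsSignMatrix.le_one (hN : IsSignMatrix N) (i : I) (j : J) : N i j ≤ 1 :=
  (le_abs_self _).trans (hN.abs_le_one i j)

lemma IsSignMatrix.eq_one_or_of_ne_zero (hN : IsSignMatrix N) {i : I} {j : J} (h : N i j ≠ 0) :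
    N i j = 1 ∨ N i j = -1 :=
  (hN i j).resolve_left h

end IsSignMatrix

lemma form_le_sum_mul_sum_sub {ι I J : Type*} [Fintype ι] [Fintype I] [Fintype J]
    {N : Matrix I J ℝ} (hN : ∀ i j, N i j ≤ 1) {a : ι → I} {b : ι → J}
    (ha : Function.Injective a) (hab : ∀ k, N (a k) (b k) = 0)
    {x : I → ℝ} {y : J → ℝ} (hx : 0 ≤ x) (hy : 0 ≤ y) :
    x ⬝ᵥ N *ᵥ y ≤ (∑ i, x i) * (∑ j, y j) - ∑ k, x (a k) * y (b k) := by
  have hinj : Function.Injective fun k => (a k, b k) := fun k l h => ha (Prod.ext_iff.1 h).1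
  have hgap := sum_comp_le_sum_of_injective
    (f := fun p : I × J => x p.1 * y p.2 * (1 - N p.1 p.2)) hinj
    fun p => mul_nonneg (mul_nonneg (hx _) (hy _)) (sub_nonneg.2 (hN _ _))
  have hform : ∑ p : I × J, x p.1 * y p.2 * (1 - N p.1 p.2) =
      (∑ i, x i) * (∑ j, y j) - x ⬝ᵥ N *ᵥ y := by
    rw [Fintype.sum_prod_type, sum_mul_sum, dotProduct_mulVec_eq, ← sum_sub_distrib]
    refine sum_congr rfl fun i _ => ?_
    rw [← sum_sub_distrib]
    exact sum_congr rfl fun j _ => by ring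
  simp only [hab, sub_zero, mul_one] at hgap
  linarith

lemma exists_ne_and_ne (p q : Fin 3) : ∃ t, p ≠ t ∧ q ≠ t := by decide +revert

namespace IsNegHexagon

variable {I J : Type*} {N : Matrix I J ℝ} {a : Fin 3 → I} {b : Fin 3 → J}

lemma transpose (h : IsNegHexagon N a b) : IsNegHexagon Nᵀ b a where
  prod_eq := by
    rw [← h.prod_eq]
    simp only [Fin.prod_univ_three, transpose_apply, Fin.reduceAdd, zero_add]
    ring
  exists_right_eq_zero := h.exists_left_eq_zero
  exists_left_eq_zero := h.exists_right_eq_zero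

lemma prod_eq_of_ne (h : IsNegHexagon N a b) {p q t : Fin 3} (hpq : p ≠ q) (hpt : p ≠ t)
    (hqt : q ≠ t) :
    N (a p) (b q) * N (a p) (b t) * (N (a q) (b p) * N (a q) (b t)) *
      (N (a t) (b p) * N (a t) (b q)) = -1 := by
  have hprod := h.prod_eq
  rw [Fin.prod_univ_three] at hprod
  fin_cases p <;> fin_cases q <;> fin_cases t <;> first | contradiction | skip
  all_goals
    change N (a 0) (b 1) * N (a 0) (b 2) * (N (a 1) (b 2) * N (a 1) (b 0)) *
      (N (a 2) (b 0) * N (a 2) (b 1)) = -1 at hprod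
    refine .trans ?_ hprod
    dsimp only [Fin.zero_eta, Fin.mk_one, Fin.reduceFinMk]
    ring

lemma ne_zero (h : IsNegHexagon N a b) {k l : Fin 3} (hkl : k ≠ l) : N (a k) (b l) ≠ 0 := by
  obtain ⟨t, hkt, hlt⟩ := exists_ne_and_ne k l
  intro h0
  simpa [h0] using h.prod_eq_of_ne hkl hkt hlt

lemma diag (h : IsNegHexagon N a b) (k : Fin 3) : N (a k) (b k) = 0 := by
  obtain ⟨l, hl⟩ := h.exists_right_eq_zero (a k)
  obtain rfl | hkl := eq_or_ne k l
  · exact hl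
  · exact absurd hl (h.ne_zero hkl)

lemma left_injective (h : IsNegHexagon N a b) : Function.Injective a := fun k l hkl => by
  by_contra hne
  exact h.ne_zero (Ne.symm hne) (hkl ▸ h.diag k)

lemma right_injective (h : IsNegHexagon N a b) : Function.Injective b :=
  h.transpose.left_injective

lemma sum_right_le (h : IsNegHexagon N a b) (hN : IsSignMatrix N) (i : I) :
    ∑ k, N i (b k) ≤ 2 := by
  obtain ⟨k, hk⟩ := h.exists_right_eq_zero i
  rw [← add_sum_erase _ _ (mem_univ k), hk, zero_add]
  refine (sum_le_card_nsmul _ _ 1 fun l _ => hN.le_one i (b l)).trans ?_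
  simp [card_erase_of_mem]

lemma sum_sum_le (h : IsNegHexagon N a b) (hN : IsSignMatrix N) :
    ∑ k, ∑ l, N (a k) (b l) ≤ 4 := by
  obtain ⟨k, l, hkl⟩ : ∃ k l, N (a k) (b l) = -1 := by
    by_contra! hne
    have hone : ∀ k l, k ≠ l → N (a k) (b l) = 1 := fun k l hkl =>
      (hN.eq_one_or_of_ne_zero (h.ne_zero hkl)).resolve_right (hne k l)
    have hprod := h.prod_eq
    rw [prod_eq_one fun k _ => by simp [hone]] at hprod
    norm_num at hprod
  have hkl_ne : l ≠ k := by
    rintro rfl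
    norm_num [h.diag] at hkl
  have hrow : ∑ l', N (a k) (b l') ≤ 0 := by
    have hrest : ∑ l' ∈ (univ.erase k).erase l, N (a k) (b l') ≤ 1 := by
      refine (sum_le_card_nsmul _ _ 1 fun l' _ => hN.le_one (a k) (b l')).trans ?_
      simp [card_erase_of_mem, hkl_ne]
    rw [← add_sum_erase _ _ (mem_univ k), ← add_sum_erase _ _ (mem_erase.2 ⟨hkl_ne, mem_univ l⟩),
      h.diag, hkl]
    linarith
  have hrest : ∑ k' ∈ univ.erase k, ∑ l', N (a k') (b l') ≤ 4 := by
    refine (sum_le_card_nsmul _ _ 2 fun k' _ => h.sum_right_le hN (a k')).trans ?_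
    norm_num [card_erase_of_mem]
  rw [← add_sum_erase _ _ (mem_univ k)]
  linarith

variable [Fintype I] [Fintype J]

lemma dotProduct_mulVec_sum_single_le [DecidableEq J] (h : IsNegHexagon N a b)
    (hN : IsSignMatrix N) {u : I → ℝ} (hu : 0 ≤ u) :
    u ⬝ᵥ N *ᵥ ∑ k, Pi.single (b k) 1 ≤ 2 * ∑ i, u i := by
  rw [dotProduct, mul_sum]
  refine sum_le_sum fun i _ => ?_
  simpa [mulVec_sum, mul_comm] using mul_le_mul_of_nonneg_left (h.sum_right_le hN i) (hu i)

lemma sum_single_dotProduct_mulVec_le [DecidableEq I] (h : IsNegHexagon N a b)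
    (hN : IsSignMatrix N) {v : J → ℝ} (hv : 0 ≤ v) :
    (∑ k, Pi.single (a k) 1) ⬝ᵥ N *ᵥ v ≤ 2 * ∑ j, v j := by
  rw [dotProduct_mulVec, dotProduct_comm, ← mulVec_transpose]
  exact h.transpose.dotProduct_mulVec_sum_single_le hN.transpose hv

lemma form_le (h : IsNegHexagon N a b) (hN : IsSignMatrix N) {x : I → ℝ} {y : J → ℝ}
    (hx : 0 ≤ x) (hy : 0 ≤ y) {ξ η : ℝ} (hξ : 0 ≤ ξ) (hη : 0 ≤ η) (hξx : ∀ k, ξ ≤ x (a k))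
    (hηy : ∀ k, η ≤ y (b k)) :
    x ⬝ᵥ N *ᵥ y ≤ (∑ i, x i - ξ) * (∑ j, y j - η) - ∑ k, (x (a k) - ξ) * (y (b k) - η) := by
  classical
  set f : I → ℝ := ∑ k, Pi.single (a k) 1 with hf
  set g : J → ℝ := ∑ k, Pi.single (b k) 1 with hg
  -- Subtracting the minimal weights from the hexagon leaves nonnegative vectors `u` and `v`.
  obtain ⟨u, rfl⟩ : ∃ u, x = u + ξ • f := ⟨x - ξ • f, by simp⟩
  obtain ⟨v, rfl⟩ : ∃ v, y = v + η • g := ⟨y - η • g, by simp⟩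
  have hu : 0 ≤ u :=
    (le_add_iff_nonneg_left _).1 (smul_sum_single_le h.left_injective hx hξx)
  have hv : 0 ≤ v :=
    (le_add_iff_nonneg_left _).1 (smul_sum_single_le h.right_injective hy hηy)
  have hfa : ∀ k, f (a k) = 1 := fun k => by
    simp [hf, Pi.single_apply, h.left_injective.eq_iff]
  have hgb : ∀ k, g (b k) = 1 := fun k => by
    simp [hg, Pi.single_apply, h.right_injective.eq_iff]
  have hfsum : ∑ i, f i = 3 := by rw [← one_dotProduct, hf, dotProduct_sum]; simp
  have hgsum : ∑ j, g j = 3 := by rw [← one_dotProduct, hg, dotProduct_sum]; simp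
  have huv := form_le_sum_mul_sum_sub hN.le_one h.left_injective h.diag hu hv
  have hfg : f ⬝ᵥ N *ᵥ g ≤ 4 := by
    simpa [hf, hg, mulVec_sum, sum_dotProduct] using h.sum_sum_le hN
  simp only [add_dotProduct, mulVec_add, dotProduct_add, smul_dotProduct, dotProduct_smul,
    mulVec_smul, smul_eq_mul, Pi.add_apply, Pi.smul_apply, sum_add_distrib, ← mul_sum, hfa, hgb,
    hfsum, hgsum, mul_one, add_sub_cancel_right]
  linarith [mul_le_mul_of_nonneg_left (h.dotProduct_mulVec_sum_single_le hN hu) hη,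
    mul_le_mul_of_nonneg_left (h.sum_single_dotProduct_mulVec_le hN hv) hξ,
    mul_le_mul_of_nonneg_left hfg (mul_nonneg hξ hη)]

end IsNegHexagon

namespace IsNegHexagon

variable {I J : Type*} {N : Matrix I J ℝ} {a : Fin 3 → I} {b : Fin 3 → J}

lemma three_le_card_left [Fintype I] (h : IsNegHexagon N a b) : 3 ≤ Fintype.card I := by
  simpa using Fintype.card_le_of_injective a h.left_injective

lemma three_le_card_right [Fintype J] (h : IsNegHexagon N a b) : 3 ≤ Fintype.card J :=
  h.transpose.three_le_card_left

variable [Fintype I] [Fintype J] {x : I → ℝ} {y : J → ℝ} {p q t : Fin 3}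

lemma form_add_le_gammaBlock_form [DecidableEq I] [DecidableEq J] (h : IsNegHexagon N a b)
    (hN : IsSignMatrix N) (hx : 0 ≤ x) (hy : 0 ≤ y) (hp : ∀ k, x (a p) ≤ x (a k))
    (hq : ∀ k, y (b q) ≤ y (b k)) (t : Fin 3) :
    x ⬝ᵥ N *ᵥ y + ∑ k ∈ univ.erase t, (x (a k) - x (a p)) * (y (b k) - y (b q)) ≤
      x ⬝ᵥ gammaBlock (a p) (a t) (b q) (b t) *ᵥ y := by
  have hle := h.form_le hN hx hy (hx (a p)) (hy (b q)) hp hq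
  rw [← add_sum_erase _ _ (mem_univ t)] at hle
  rw [dotProduct_gammaBlock_mulVec]
  linarith

lemma le_gammaIndex (h : IsNegHexagon N a b) (hN : IsSignMatrix N) {μ : ℝ}
    (hxy : IsNonnegSingularPair N μ x y) :
    μ ≤ gammaIndex (Fintype.card I) (Fintype.card J) := by
  classical
  obtain ⟨p, hp⟩ := Finite.exists_min (x ∘ a)
  obtain ⟨q, hq⟩ := Finite.exists_min (y ∘ b)
  obtain ⟨t, hpt, hqt⟩ := exists_ne_and_ne p q
  have hslack : 0 ≤ ∑ k ∈ univ.erase t, (x (a k) - x (a p)) * (y (b k) - y (b q)) :=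
    sum_nonneg fun k _ => mul_nonneg (sub_nonneg.2 (hp k)) (sub_nonneg.2 (hq k))
  have hle := h.form_add_le_gammaBlock_form hN hxy.left_nonneg hxy.right_nonneg hp hq t
  have hgamma := two_mul_gammaBlock_form_le (h.left_injective.ne hpt) (h.right_injective.ne hqt)
    h.three_le_card_left h.three_le_card_right x y
  refine le_of_mul_le_mul_right ?_
    (add_pos hxy.left_dotProduct_self_pos hxy.transpose.left_dotProduct_self_pos)
  linarith [hxy.form_eq_left, hxy.form_eq_right]

lemma gammaIndex_pos (h : IsNegHexagon N a b) :
    0 < gammaIndex (Fintype.card I) (Fintype.card J) :=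
  _root_.gammaIndex_pos (by exact_mod_cast h.three_le_card_left)
    (by exact_mod_cast h.three_le_card_right)

lemma singularPair_gammaBlock [DecidableEq I] [DecidableEq J] (h : IsNegHexagon N a b)
    (hN : IsSignMatrix N)
    (hxy : IsNonnegSingularPair N (gammaIndex (Fintype.card I) (Fintype.card J)) x y)
    (hp : ∀ k, x (a p) ≤ x (a k)) (hq : ∀ k, y (b q) ≤ y (b k)) (hpt : p ≠ t) (hqt : q ≠ t) :
    IsNonnegSingularPair (gammaBlock (a p) (a t) (b q) (b t))
        (gammaIndex (Fintype.card I) (Fintype.card J)) x y ∧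
      ∑ k ∈ univ.erase t, (x (a k) - x (a p)) * (y (b k) - y (b q)) = 0 := by
  have hslack : 0 ≤ ∑ k ∈ univ.erase t, (x (a k) - x (a p)) * (y (b k) - y (b q)) :=
    sum_nonneg fun k _ => mul_nonneg (sub_nonneg.2 (hp k)) (sub_nonneg.2 (hq k))
  have hle := h.form_add_le_gammaBlock_form hN hxy.left_nonneg hxy.right_nonneg hp hq t
  have hgamma := two_mul_gammaBlock_form_le (h.left_injective.ne hpt) (h.right_injective.ne hqt)
    h.three_le_card_left h.three_le_card_right x y
  have hform_left := hxy.form_eq_left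
  have hform_right := hxy.form_eq_right
  have htight : 2 * (x ⬝ᵥ gammaBlock (a p) (a t) (b q) (b t) *ᵥ y) =
      gammaIndex (Fintype.card I) (Fintype.card J) * (x ⬝ᵥ x + y ⬝ᵥ y) := by linarith
  refine ⟨⟨?_, ?_, hxy.left_nonneg, hxy.right_nonneg, hxy.left_ne_zero, hxy.right_ne_zero⟩,
    by linarith⟩
  · exact gammaBlock_mulVec_of_form_eq (h.left_injective.ne hpt) (h.right_injective.ne hqt)
      h.three_le_card_left h.three_le_card_right htight
  · exact vecMul_gammaBlock_of_form_eq (h.left_injective.ne hpt) (h.right_injective.ne hqt)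
      h.three_le_card_left h.three_le_card_right htight

lemma argmin_ne_argmin (h : IsNegHexagon N a b) (hN : IsSignMatrix N)
    (hxy : IsNonnegSingularPair N (gammaIndex (Fintype.card I) (Fintype.card J)) x y)
    (hp : ∀ k, x (a p) ≤ x (a k)) (hq : ∀ k, y (b q) ≤ y (b k)) : p ≠ q := by
  classical
  rintro rfl
  obtain ⟨t, s, hpt, hps, hts⟩ : ∃ t s, p ≠ t ∧ p ≠ s ∧ t ≠ s :=
    have ⟨t, hpt, _⟩ := exists_ne_and_ne p p
    have ⟨s, hps, hts⟩ := exists_ne_and_ne p t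
    ⟨t, s, hpt, hps, hts⟩
  obtain ⟨hB, hslack⟩ := h.singularPair_gammaBlock hN hxy hp hq hpt hpt
  have hBT := gammaBlock_transpose (a p) (a t) (b p) (b t) ▸ hB.transpose
  have hα := h.left_injective.ne hpt
  have hβ := h.right_injective.ne hpt
  have hσ := h.gammaIndex_pos
  rw [sum_eq_zero_iff_of_nonneg fun k _ => mul_nonneg (sub_nonneg.2 (hp k)) (sub_nonneg.2 (hq k))]
    at hslack
  have hzero := hslack s (mem_erase.2 ⟨hts.symm, mem_univ s⟩)
  rw [left_eq_add_of_gammaBlock_mulVec hσ.ne' hα hB.mulVec_eq (h.left_injective.ne hps.symm)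
      (h.left_injective.ne hts.symm),
    left_eq_add_of_gammaBlock_mulVec hσ.ne' hβ hBT.mulVec_eq (h.right_injective.ne hps.symm)
      (h.right_injective.ne hts.symm), add_sub_cancel_right, add_sub_cancel_right] at hzero
  exact (mul_pos (hB.left_pos_of_gammaBlock hσ hα hβ hα.symm)
    (hBT.left_pos_of_gammaBlock hσ hβ hα hβ.symm)).ne' hzero

end IsNegHexagon

lemma eq_one_of_sum_mul_eq_sub {ι : Type*} [Fintype ι] {f w : ι → ℝ} {i₀ : ι}
    (hf : ∀ i, f i ≤ 1) (hw : 0 ≤ w) (h0 : f i₀ = 0) (hsum : ∑ i, w i * f i = ∑ i, w i - w i₀)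
    {i : ι} (hi : i ≠ i₀) (hwi : 0 < w i) : f i = 1 := by
  classical
  have hgap : ∑ i ∈ univ.erase i₀, w i * (1 - f i) = 0 := by
    simp only [mul_sub, mul_one, sum_sub_distrib, sum_erase_eq_sub (mem_univ i₀), h0]
    linarith
  rw [sum_eq_zero_iff_of_nonneg fun i _ => mul_nonneg (hw i) (sub_nonneg.2 (hf i))] at hgap
  have := (mul_eq_zero.1 (hgap i (mem_erase.2 ⟨hi, mem_univ i⟩))).resolve_left hwi.ne'
  linarith

/-- Up to switching, `N` is the block of the adjacency matrix of `Γ_{r,s}` for some choice of its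
four distinguished vertices. -/
def IsGammaBlock {I J : Type*} [DecidableEq I] [DecidableEq J] (N : Matrix I J ℝ) : Prop :=
  ∃ (α α' : I) (β β' : J), α ≠ α' ∧ β ≠ β' ∧ ∃ (ε : I → ℝ) (δ : J → ℝ),
    (∀ i, ε i = 1 ∨ ε i = -1) ∧ (∀ j, δ j = 1 ∨ δ j = -1) ∧
      ∀ i j, N i j = ε i * gammaBlock α α' β β' i j * δ j

namespace IsNegHexagon

variable {I J : Type*} [DecidableEq I] [DecidableEq J] {N : Matrix I J ℝ} {a : Fin 3 → I}
  {b : Fin 3 → J}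

section Entries

variable [Fintype I] [Fintype J] {x : I → ℝ} {y : J → ℝ} {p q t : Fin 3} {σ : ℝ}

lemma eq_one_of_ne_left (h : IsNegHexagon N a b) (hN : IsSignMatrix N) (hσ : 0 < σ)
    (hxy : IsNonnegSingularPair N σ x y)
    (hB : IsNonnegSingularPair (gammaBlock (a p) (a t) (b q) (b t)) σ x y) (hpq : p ≠ q)
    (hpt : p ≠ t) (hqt : q ≠ t) {i : I} (hi : i ≠ a p) : N i (b p) = 1 := by
  have hxi := hB.left_pos_of_gammaBlock hσ (h.left_injective.ne hpt) (h.right_injective.ne hqt) hi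
  refine eq_one_of_sum_mul_eq_sub (f := fun i => N i (b p)) (fun i => hN.le_one i (b p))
    hxy.left_nonneg (h.diag p) ?_ hi hxi
  have hcol := congrFun (hxy.vecMul_eq.trans hB.vecMul_eq.symm) (b p)
  rw [vecMul_gammaBlock] at hcol
  simpa [h.right_injective.eq_iff, hpq, hpt, vecMul, dotProduct] using hcol

lemma eq_one_of_ne_left_of_ne_left (h : IsNegHexagon N a b) (hN : IsSignMatrix N) (hσ : 0 < σ)
    (hxy : IsNonnegSingularPair N σ x y)
    (hB : IsNonnegSingularPair (gammaBlock (a p) (a t) (b q) (b t)) σ x y)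
    (hpt : p ≠ t) (hqt : q ≠ t) {i : I} (hi : i ≠ a p) (hi' : i ≠ a t) : N i (b t) = 1 := by
  have hxi := hB.left_pos_of_gammaBlock hσ (h.left_injective.ne hpt) (h.right_injective.ne hqt) hi
  refine eq_one_of_sum_mul_eq_sub (f := fun i => N i (b t)) (fun i => hN.le_one i (b t))
    hxy.left_nonneg (h.diag t) ?_ hi' hxi
  have hcol := congrFun (hxy.vecMul_eq.trans hB.vecMul_eq.symm) (b t)
  rw [vecMul_gammaBlock] at hcol
  simpa [h.right_injective.eq_iff, hqt.symm, vecMul, dotProduct] using hcol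

lemma row_eq_of_ne_left (h : IsNegHexagon N a b) (hN : IsSignMatrix N) (hσ : 0 < σ)
    (hxy : IsNonnegSingularPair N σ x y)
    (hB : IsNonnegSingularPair (gammaBlock (a p) (a t) (b q) (b t)) σ x y) (hpq : p ≠ q)
    (hpt : p ≠ t) (hqt : q ≠ t) {i : I} (hi : i ≠ a p) (hi' : i ≠ a t) (j : J) :
    N i j = if j = b q then 0 else 1 := by
  have hβ : N i (b q) = 0 := by
    obtain ⟨k, hk⟩ := h.exists_right_eq_zero i
    have hkp : k ≠ p := by
      rintro rfl
      simp [h.eq_one_of_ne_left hN hσ hxy hB hpq hpt hqt hi] at hk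
    have hkt : k ≠ t := by
      rintro rfl
      simp [h.eq_one_of_ne_left_of_ne_left hN hσ hxy hB hpt hqt hi hi'] at hk
    obtain rfl : k = q := by omega
    exact hk
  split_ifs with hj
  · rw [hj, hβ]
  · have hyj := (gammaBlock_transpose (a p) (a t) (b q) (b t) ▸ hB.transpose).left_pos_of_gammaBlock
      hσ (h.right_injective.ne hqt) (h.left_injective.ne hpt) hj
    refine eq_one_of_sum_mul_eq_sub (hN.le_one i) hxy.right_nonneg hβ ?_ hj hyj
    have hrow := congrFun (hxy.mulVec_eq.trans hB.mulVec_eq.symm) i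
    rw [gammaBlock_mulVec] at hrow
    simpa [hi, hi', mulVec, dotProduct, mul_comm] using hrow

end Entries

lemma isGammaBlock_of_row_of_col (h : IsNegHexagon N a b) (hN : IsSignMatrix N) {p q t : Fin 3}
    (hpq : p ≠ q) (hpt : p ≠ t) (hqt : q ≠ t)
    (hrow : ∀ i, i ≠ a p → i ≠ a t → ∀ j, N i j = if j = b q then 0 else 1)
    (hcol : ∀ j, j ≠ b q → j ≠ b t → ∀ i, N i j = if i = a p then 0 else 1) :
    IsGammaBlock N := by
  have ha {k l : Fin 3} (hkl : k ≠ l) : a k ≠ a l := h.left_injective.ne hkl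
  have hb {k l : Fin 3} (hkl : k ≠ l) : b k ≠ b l := h.right_injective.ne hkl
  have hprod : N (a p) (b q) * N (a p) (b t) * N (a t) (b q) = -1 := by
    simpa [hrow (a q) (ha hpq.symm) (ha hqt), hcol (b p) (hb hpq) (hb hpt), hb hpq, hb hqt.symm,
      ha hpt.symm] using h.prod_eq_of_ne hpq hpt hqt
  have hαβ' := hN.eq_one_or_of_ne_zero (h.ne_zero hpt)
  have hα'β := hN.eq_one_or_of_ne_zero (h.ne_zero hqt.symm)
  refine ⟨a p, a t, b q, b t, ha hpt, hb hqt, Function.update 1 (a p) (N (a p) (b t)),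
    Function.update 1 (b q) (N (a t) (b q)), fun i => ?_, fun j => ?_, fun i j => ?_⟩
  · obtain rfl | hi := eq_or_ne i (a p)
    · simpa using hαβ'
    · simp [hi]
  · obtain rfl | hj := eq_or_ne j (b q)
    · simpa using hα'β
    · simp [hj]
  · rw [gammaBlock_apply (ha hpt) (hb hqt)]
    by_cases hi : i = a p ∨ i = a t
    · by_cases hj : j = b q ∨ j = b t
      · obtain ⟨rfl | rfl, rfl | rfl⟩ := And.intro hi hj
        · grind
        · simp [hb hqt.symm]
        · simp [ha hpt.symm, hb hqt]
        · simp [ha hpt.symm, hb hqt.symm, h.diag]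
      · rw [not_or] at hj
        rw [hcol j hj.1 hj.2]
        obtain rfl | rfl := hi <;> simp [hj, ha hpt.symm]
    · rw [not_or] at hi
      rw [hrow i hi.1 hi.2]
      by_cases hj : j = b q <;> simp [hi, hj]

theorem isGammaBlock_of_gammaIndex [Fintype I] [Fintype J] (h : IsNegHexagon N a b)
    (hN : IsSignMatrix N) {x : I → ℝ} {y : J → ℝ}
    (hxy : IsNonnegSingularPair N (gammaIndex (Fintype.card I) (Fintype.card J)) x y) :
    IsGammaBlock N := by
  obtain ⟨p, hp⟩ := Finite.exists_min (x ∘ a)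
  obtain ⟨q, hq⟩ := Finite.exists_min (y ∘ b)
  have hpq := h.argmin_ne_argmin hN hxy hp hq
  obtain ⟨t, hpt, hqt⟩ := exists_ne_and_ne p q
  obtain ⟨hB, -⟩ := h.singularPair_gammaBlock hN hxy hp hq hpt hqt
  have hBT := gammaBlock_transpose (a p) (a t) (b q) (b t) ▸ hB.transpose
  have hσ := h.gammaIndex_pos
  exact h.isGammaBlock_of_row_of_col hN hpq hpt hqt
    (fun i hi hi' => h.row_eq_of_ne_left hN hσ hxy hB hpq hpt hqt hi hi')
    (fun j hj hj' => h.transpose.row_eq_of_ne_left hN.transpose hσ hxy.transpose hBT hpq.symm hqt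
      hpt hj hj')

end IsNegHexagon

/-! ### Long negative cycles -/

section PosPart

variable {I J : Type*} [Fintype I] [Fintype J] {N : Matrix I J ℝ}

lemma sq_dotProduct_mulVec_le (x : I → ℝ) (y : J → ℝ) :
    (x ⬝ᵥ N *ᵥ y) ^ 2 ≤ (∑ i, ∑ j, N i j ^ 2) * ((x ⬝ᵥ x) * (y ⬝ᵥ y)) := by
  have hcs := sum_mul_sq_le_sq_mul_sq univ (fun p : I × J => N p.1 p.2) fun p => x p.1 * y p.2
  simp only [Fintype.sum_prod_type, mul_pow] at hcs
  rw [dotProduct_mulVec_eq, dotProduct, dotProduct, sum_mul_sum]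
  simpa only [← sq, mul_left_comm, mul_assoc] using hcs

lemma IsNonnegSingularPair.sq_le_sum_posPart_sq {μ : ℝ} {x : I → ℝ} {y : J → ℝ}
    (h : IsNonnegSingularPair N μ x y) (hμ : 0 ≤ μ) : μ ^ 2 ≤ ∑ i, ∑ j, (N i j)⁺ ^ 2 := by
  have hxx := h.left_dotProduct_self_pos
  have hyy := h.transpose.left_dotProduct_self_pos
  have hform : x ⬝ᵥ N *ᵥ y ≤ x ⬝ᵥ N.map (·⁺) *ᵥ y := by
    simp only [dotProduct_mulVec_eq]
    refine sum_le_sum fun i _ => sum_le_sum fun j _ => ?_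
    exact mul_le_mul_of_nonneg_right (mul_le_mul_of_nonneg_left (le_posPart _) (h.left_nonneg i))
      (h.right_nonneg j)
  refine le_of_mul_le_mul_right ?_ (mul_pos hxx hyy)
  calc μ ^ 2 * ((x ⬝ᵥ x) * (y ⬝ᵥ y)) = (x ⬝ᵥ N *ᵥ y) ^ 2 := by
        rw [sq (x ⬝ᵥ N *ᵥ y)]
        nth_rw 1 [h.form_eq_left]
        rw [h.form_eq_right]
        ring
    _ ≤ (x ⬝ᵥ N.map (·⁺) *ᵥ y) ^ 2 := by
        refine pow_le_pow_left₀ ?_ hform 2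
        rw [h.form_eq_left]
        exact mul_nonneg hμ hxx.le
    _ ≤ _ := sq_dotProduct_mulVec_le x y

lemma IsSignMatrix.sum_posPart_sq_add_one_le (hN : IsSignMatrix N) {i₀ : I} {j₀ : J}
    (h : N i₀ j₀ = -1) : ∑ i, ∑ j, (N i j)⁺ ^ 2 + 1 ≤ ∑ i, ∑ j, |N i j| := by
  have hgap : ∀ p : I × J, 0 ≤ |N p.1 p.2| - (N p.1 p.2)⁺ ^ 2 := fun p => by
    rcases hN p.1 p.2 with h | h | h <;> simp [h]
  have := single_le_sum (f := fun p : I × J => |N p.1 p.2| - (N p.1 p.2)⁺ ^ 2)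
    (fun p _ => hgap p) (mem_univ (i₀, j₀))
  simp only [sum_sub_distrib, Fintype.sum_prod_type, h, abs_neg, abs_one,
    posPart_eq_zero.2 (by norm_num : (-1 : ℝ) ≤ 0)] at this
  linarith

end PosPart

lemma sum_le_sum_comp_add_of_injective {ι I : Type*} [Fintype ι] [Fintype I] {a : ι → I}
    (ha : Function.Injective a) {f : I → ℝ} {c : ℝ} (hf : ∀ i, f i ≤ c) :
    ∑ i, f i ≤ ∑ k, f (a k) + (Fintype.card I - Fintype.card ι) * c := by
  have := sum_comp_le_sum_of_injective ha fun i => sub_nonneg.2 (hf i)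
  simp only [sum_sub_distrib, sum_const, card_univ, nsmul_eq_mul] at this
  linarith

/-- The rows `a` and columns `b` are eight consecutive vertices of a shortest negative cycle of
length at least eight in a bipartite signed graph: cycle vertices at distance four have no common
neighbour. -/
structure IsLongCycle {I J : Type*} (N : Matrix I J ℝ) (a : Fin 4 → I) (b : Fin 4 → J) :
    Prop where
  left_injective : Function.Injective a
  right_injective : Function.Injective b
  right_eq_zero : ∀ i k, N i (b k) = 0 ∨ N i (b (k + 2)) = 0
  left_eq_zero : ∀ j k, N (a k) j = 0 ∨ N (a (k + 2)) j = 0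

namespace IsLongCycle

variable {I J : Type*} {N : Matrix I J ℝ} {a : Fin 4 → I} {b : Fin 4 → J}

lemma transpose (h : IsLongCycle N a b) : IsLongCycle Nᵀ b a where
  left_injective := h.right_injective
  right_injective := h.left_injective
  right_eq_zero := h.left_eq_zero
  left_eq_zero := h.right_eq_zero

lemma four_le_card_left [Fintype I] (h : IsLongCycle N a b) : 4 ≤ Fintype.card I := by
  simpa using Fintype.card_le_of_injective a h.left_injective

lemma sum_abs_right_le (h : IsLongCycle N a b) (hN : IsSignMatrix N) (i : I) :
    ∑ k, |N i (b k)| ≤ 2 := by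
  have hpair : ∀ k, |N i (b k)| + |N i (b (k + 2))| ≤ 1 := fun k => by
    rcases h.right_eq_zero i k with h0 | h0 <;> simp [h0, hN.abs_le_one]
  have h02 := hpair 0
  have h13 := hpair 1
  rw [Fin.sum_univ_four]
  simp only [Fin.isValue, zero_add, Fin.reduceAdd] at h02 h13
  linarith

lemma sum_abs_col_le [Fintype I] (h : IsLongCycle N a b) (hN : IsSignMatrix N) (j : J) :
    ∑ i, |N i j| ≤ Fintype.card I - 2 := by
  have hsum := sum_le_sum_comp_add_of_injective h.left_injective fun i => hN.abs_le_one i j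
  have hcycle := h.transpose.sum_abs_right_le hN.transpose j
  simp only [transpose_apply] at hcycle
  simp only [Fintype.card_fin, Nat.cast_ofNat] at hsum
  linarith

variable [Fintype I] [Fintype J]

lemma sum_sum_abs_le (h : IsLongCycle N a b) (hN : IsSignMatrix N) :
    ∑ i, ∑ j, |N i j| ≤ ((Fintype.card I : ℝ) - 2) * (Fintype.card J - 2) + 4 := by
  have hsum := sum_le_sum_comp_add_of_injective h.right_injective (h.sum_abs_col_le hN)
  have hcycle : ∑ k, ∑ i, |N i (b k)| ≤ 2 * Fintype.card I := by
    rw [sum_comm]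
    refine (sum_le_card_nsmul _ _ 2 fun i _ => h.sum_abs_right_le hN i).trans_eq ?_
    rw [card_univ, nsmul_eq_mul, mul_comm]
  rw [sum_comm]
  simp only [Fintype.card_fin, Nat.cast_ofNat] at hsum
  linarith

theorem lt_gammaIndex (h : IsLongCycle N a b) (hN : IsSignMatrix N)
    {i₀ : I} {j₀ : J} (hneg : N i₀ j₀ = -1) {μ : ℝ} (hμ : 0 ≤ μ) {x : I → ℝ} {y : J → ℝ}
    (hxy : IsNonnegSingularPair N μ x y) :
    μ < gammaIndex (Fintype.card I) (Fintype.card J) := by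
  have hr : (4 : ℝ) ≤ Fintype.card I := by exact_mod_cast h.four_le_card_left
  have hs : (4 : ℝ) ≤ Fintype.card J := by exact_mod_cast h.transpose.four_le_card_left
  refine lt_of_pow_lt_pow_left₀ 2 (Real.sqrt_nonneg _) ?_
  have hμ_sq := hxy.sq_le_sum_posPart_sq hμ
  have habs := hN.sum_posPart_sq_add_one_le hneg
  have hedges := h.sum_sum_abs_le hN
  set r : ℝ := (Fintype.card I : ℝ)
  set s : ℝ := (Fintype.card J : ℝ)
  have hpoly : gammaPoly r s ((r - 1) * (s - 1) - 2) < 0 := by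
    unfold gammaPoly
    linarith
  linarith [lt_gammaIndex_sq hpoly]

end IsLongCycle

/-! ### Negative closed walks -/

namespace SignedGraph

variable {V : Type*} (Γ : SignedGraph V)

lemma sign_eq_zero_or (u v : V) : Γ.sign u v = 0 ∨ Γ.sign u v = 1 ∨ Γ.sign u v = -1 := by
  by_cases h : Γ.G.Adj u v
  · exact .inr (Γ.sign_edge u v h)
  · exact .inl (Γ.sign_nonedge u v h)

variable {Γ} in
lemma adj_of_sign_ne_zero {u v : V} (h : Γ.sign u v ≠ 0) : Γ.G.Adj u v :=
  not_imp_comm.1 (Γ.sign_nonedge u v) h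

lemma sign_mul_self {u v : V} (h : Γ.G.Adj u v) : Γ.sign u v * Γ.sign u v = 1 := by
  rcases Γ.sign_edge u v h with h | h <;> norm_num [h]

/-- The sign of a walk: the product of the signs of its edges, counted with multiplicity. -/
def walkSign {u v : V} (w : Γ.G.Walk u v) : ℝ := (w.edges.map Γ.edgeSign).prod

@[simp]
lemma walkSign_nil {u : V} : Γ.walkSign (.nil : Γ.G.Walk u u) = 1 := by simp [walkSign]

@[simp]
lemma walkSign_cons {u v w : V} (h : Γ.G.Adj u v) (p : Γ.G.Walk v w) :
    Γ.walkSign (p.cons h) = Γ.sign u v * Γ.walkSign p := by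
  simp [walkSign, edgeSign]

@[simp]
lemma walkSign_append {u v w : V} (p : Γ.G.Walk u v) (q : Γ.G.Walk v w) :
    Γ.walkSign (p.append q) = Γ.walkSign p * Γ.walkSign q := by
  simp [walkSign]

lemma walkSign_eq_one_or {u v : V} (p : Γ.G.Walk u v) :
    Γ.walkSign p = 1 ∨ Γ.walkSign p = -1 := by
  induction p with
  | nil => simp
  | cons h p ih => rcases Γ.sign_edge _ _ h with h | h <;> rcases ih with ih | ih <;> simp [h, ih]

lemma walkSign_eq_prod_range {u v : V} (p : Γ.G.Walk u v) :
    Γ.walkSign p = ∏ k ∈ range p.length, Γ.sign (p.getVert k) (p.getVert (k + 1)) := by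
  induction p with
  | nil => simp
  | cons h p ih => simp [prod_range_succ', ih, mul_comm]

lemma sign_quad_ne_neg_one
    (hC4 : ∀ (u : V) (w : Γ.G.Walk u u), Γ.IsNegCycle w → w.length ≠ 4) (u v w t : V) :
    Γ.sign u v * Γ.sign v w * Γ.sign w t * Γ.sign t u ≠ -1 := by
  intro h
  have huv : Γ.G.Adj u v := adj_of_sign_ne_zero fun e => by simp [e] at h
  have hvw : Γ.G.Adj v w := adj_of_sign_ne_zero fun e => by simp [e] at h
  have hwt : Γ.G.Adj w t := adj_of_sign_ne_zero fun e => by simp [e] at h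
  have htu : Γ.G.Adj t u := adj_of_sign_ne_zero fun e => by simp [e] at h
  have huw : u ≠ w := by
    rintro rfl
    rw [Γ.sign_symm v u, Γ.sign_symm t u] at h
    linarith [mul_self_nonneg (Γ.sign u v * Γ.sign u t)]
  have hvt : v ≠ t := by
    rintro rfl
    rw [Γ.sign_symm w v, Γ.sign_symm v u] at h
    linarith [mul_self_nonneg (Γ.sign u v * Γ.sign v w)]
  refine hC4 u (.cons huv (.cons hvw (.cons hwt (.cons htu .nil)))) ⟨?_, ?_⟩ rfl
  · simp [SimpleGraph.Walk.cons_isCycle_iff, SimpleGraph.Walk.cons_isPath_iff, huv.ne, huv.ne',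
      hvw.ne, hwt.ne, htu.ne, huw, huw.symm, hvt]
  · simpa [edgeSign, mul_assoc] using h

lemma walkSign_ne_neg_one_of_length_le_four
    (h4 : ∀ u v w t, Γ.sign u v * Γ.sign v w * Γ.sign w t * Γ.sign t u ≠ -1) {u : V}
    (p : Γ.G.Walk u u) (hp : p.length ≤ 4) (heven : Even p.length) : Γ.walkSign p ≠ -1 := by
  match p with
  | .nil => norm_num
  | .cons h .nil => simp at heven
  | .cons h (.cons h' .nil) => norm_num [Γ.sign_symm _ u, Γ.sign_mul_self h]
  | .cons _ (.cons _ (.cons _ .nil)) => simp [Nat.even_iff] at heven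
  | .cons _ (.cons _ (.cons _ (.cons _ .nil))) =>
    simpa only [walkSign_cons, walkSign_nil, mul_one, mul_assoc] using h4 _ _ _ _
  | .cons _ (.cons _ (.cons _ (.cons _ (.cons _ p)))) =>
    simp only [SimpleGraph.Walk.length_cons] at hp
    omega

variable {Γ}

/-- A closed walk of sign `-1` whose length is minimal among all closed walks of sign `-1`. -/
structure IsShortestNeg {u : V} (p : Γ.G.Walk u u) : Prop where
  walkSign_eq : Γ.walkSign p = -1
  length_le : ∀ (v : V) (q : Γ.G.Walk v v), Γ.walkSign q = -1 → p.length ≤ q.length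

lemma Unbalanced.exists_isShortestNeg (hU : Γ.Unbalanced) (C : Γ.G.Coloring Bool) :
    ∃ (u : V) (p : Γ.G.Walk u u), IsShortestNeg p ∧ C u = true := by
  classical
  have hex : ∃ n, ∃ (u : V) (p : Γ.G.Walk u u), Γ.walkSign p = -1 ∧ p.length = n := by
    obtain ⟨u, p, -, hp⟩ := hU
    exact ⟨_, u, p, hp, rfl⟩
  obtain ⟨u, p, hp, hlen⟩ := Nat.find_spec hex
  have hshort : IsShortestNeg p :=
    ⟨hp, fun v q hq => hlen.trans_le <| Nat.find_min' hex ⟨v, q, hq, rfl⟩⟩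
  cases hu : C u with
  | true => exact ⟨u, p, hshort, hu⟩
  | false =>
    cases p with
    | nil => norm_num at hp
    | @cons _ v _ h p =>
      refine ⟨v, p.append (.cons h .nil), ⟨?_, ?_⟩, ?_⟩
      · simpa [mul_comm] using hp
      · simpa using hshort.length_le
      · simpa [hu] using (C.valid h).symm

-- Otherwise the path through `w` would be a chord cutting the walk into two shorter closed walks,
-- one of which is negative.
lemma IsShortestNeg.not_adj_of_append {u x y : V} {p : Γ.G.Walk u x} {q : Γ.G.Walk x y}
    {t : Γ.G.Walk y u} (h : IsShortestNeg (p.append (q.append t))) (hq : q.length = 4)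
    (hlen : 8 ≤ (p.append (q.append t)).length) {w : V} (hwx : Γ.G.Adj w x) : ¬ Γ.G.Adj w y := by
  intro hwy
  have hsign_of_lt : ∀ {v : V} (c : Γ.G.Walk v v),
      c.length < (p.append (q.append t)).length → Γ.walkSign c = 1 := fun c hc =>
    (Γ.walkSign_eq_one_or c).resolve_right fun hc' => (h.length_le _ c hc').not_gt hc
  have hinner := hsign_of_lt (q.append (.cons hwy.symm (.cons hwx .nil))) (by simp at *; omega)
  have houter := hsign_of_lt (p.append (.cons hwx.symm (.cons hwy t))) (by simp; omega)
  have hneg := h.walkSign_eq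
  simp only [walkSign_append, walkSign_cons, walkSign_nil, mul_one, Γ.sign_symm _ w]
    at hinner houter hneg
  have hone : (1 : ℝ) = -1 := by
    linear_combination -houter * Γ.walkSign q * (Γ.sign w y * Γ.sign w x) - hinner +
      Γ.sign w x ^ 2 * Γ.sign w y ^ 2 * hneg -
      Γ.sign w x ^ 2 * Γ.sign_mul_self hwy - Γ.sign_mul_self hwx
  norm_num at hone

lemma IsShortestNeg.not_adj_getVert_add_four {u : V} {p : Γ.G.Walk u u} (h : IsShortestNeg p)
    (hlen : 8 ≤ p.length) {k : ℕ} (hk : k + 4 ≤ p.length) {w : V}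
    (hw : Γ.G.Adj w (p.getVert k)) : ¬ Γ.G.Adj w (p.getVert (k + 4)) := by
  have hsplit : (p.take k).append (((p.drop k).take 4).append ((p.drop k).drop 4)) = p := by
    simp only [SimpleGraph.Walk.append_take_drop_eq]
  rw [← hsplit] at h hlen
  simpa [SimpleGraph.Walk.drop_getVert] using
    h.not_adj_of_append (by simp [SimpleGraph.Walk.take_length]; omega) hlen hw

end SignedGraph

section Quadrangles

variable {I J : Type*} {N : Matrix I J ℝ} {a : Fin 3 → I} {b : Fin 3 → J}

lemma IsSignMatrix.exists_right_eq_zero_of_prod_eq (hN : IsSignMatrix N)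
    (h4 : ∀ i i' j j', N i j * N i' j * N i' j' * N i j' ≠ -1)
    (hprod : ∏ k, N (a k) (b (k + 1)) * N (a k) (b (k + 2)) = -1) (i : I) :
    ∃ k, N i (b k) = 0 := by
  by_contra! hi
  have hsq : ∀ k, N i (b k) ^ 2 = 1 := fun k => by
    rcases hN.eq_one_or_of_ne_zero (hi k) with h | h <;> norm_num [h]
  have hquad : ∀ k, N i (b (k + 1)) * N (a k) (b (k + 1)) * N (a k) (b (k + 2)) *
      N i (b (k + 2)) = 1 := fun k => by
    have hne := h4 i (a k) (b (k + 1)) (b (k + 2))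
    obtain ⟨h₁, h₂⟩ := mul_ne_zero_iff.1
      (prod_ne_zero_iff.1 (hprod.trans_ne (by norm_num)) k (mem_univ k))
    rcases hN.eq_one_or_of_ne_zero h₁ with h₁ | h₁ <;>
    rcases hN.eq_one_or_of_ne_zero h₂ with h₂ | h₂ <;>
    rcases hN.eq_one_or_of_ne_zero (hi (k + 1)) with h₃ | h₃ <;>
    rcases hN.eq_one_or_of_ne_zero (hi (k + 2)) with h₄ | h₄ <;> simp [h₁, h₂, h₃, h₄] at hne ⊢
  have hneg : ∏ k, N i (b (k + 1)) * N (a k) (b (k + 1)) * N (a k) (b (k + 2)) *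
      N i (b (k + 2)) = -1 := calc
    _ = (∏ k, N (a k) (b (k + 1)) * N (a k) (b (k + 2))) * ∏ k, N i (b k) ^ 2 := by
      simp only [Fin.prod_univ_three, Fin.reduceAdd]
      ring
    _ = -1 := by simp [hprod, hsq]
  norm_num [hquad] at hneg

lemma IsSignMatrix.isNegHexagon (hN : IsSignMatrix N)
    (h4 : ∀ i i' j j', N i j * N i' j * N i' j' * N i j' ≠ -1)
    (hprod : ∏ k, N (a k) (b (k + 1)) * N (a k) (b (k + 2)) = -1) : IsNegHexagon N a b where
  prod_eq := hprod
  exists_right_eq_zero := hN.exists_right_eq_zero_of_prod_eq h4 hprod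
  exists_left_eq_zero := by
    refine hN.transpose.exists_right_eq_zero_of_prod_eq (b := a) (a := b) (fun j j' i i' => ?_) ?_
    · simpa only [transpose_apply, mul_right_comm] using h4 i i' j j'
    · rw [← hprod]
      simp only [Fin.prod_univ_three, transpose_apply, Fin.reduceAdd]
      ring

end Quadrangles

namespace SignedGraph

variable {V : Type*}

/-- The bipartite adjacency matrix of `Γ` with respect to a `2`-colouring `c`, its rows being the
vertices of colour `true`. -/
def biadjMatrix (Γ : SignedGraph V) (c : V → Bool) :
    Matrix {v // c v = true} {v // ¬ c v = true} ℝ :=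
  .of fun i j => Γ.sign i j

variable {Γ : SignedGraph V}

@[simp]
lemma biadjMatrix_apply (c : V → Bool) (i : {v // c v = true}) (j : {v // ¬ c v = true}) :
    Γ.biadjMatrix c i j = Γ.sign i j := rfl

variable (Γ) in
lemma isSignMatrix_biadjMatrix (c : V → Bool) : IsSignMatrix (Γ.biadjMatrix c) :=
  fun i j => Γ.sign_eq_zero_or i j

lemma coloring_getVert_eq_true_iff (C : Γ.G.Coloring Bool) {u : V} {p : Γ.G.Walk u u}
    (hu : C u = true) {k : ℕ} (hk : k ≤ p.length) :
    C (p.getVert k) = true ↔ Even k := by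
  have := C.even_length_iff_congr (p.take k)
  rw [SimpleGraph.Walk.take_length, min_eq_left hk] at this
  simp [this, hu]

namespace IsShortestNeg

variable {u : V} {p : Γ.G.Walk u u}

lemma getVert_injective (h : IsShortestNeg p) (hlen : 8 ≤ p.length) {k : ℕ} (hk : k ≤ 1) :
    Function.Injective fun i : Fin 4 => p.getVert (k + 2 * i) := by
  have hadj : ∀ m < p.length, Γ.G.Adj (p.getVert m) (p.getVert (m + 1)) := fun m hm =>
    p.adj_getVert_succ hm
  have hsep : ∀ {m : ℕ} {w : V}, m + 4 ≤ p.length → Γ.G.Adj w (p.getVert m) →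
      ¬ Γ.G.Adj w (p.getVert (m + 4)) :=
    fun hm => h.not_adj_getVert_add_four hlen hm
  have h₁ := hadj k (by omega)
  have h₂ := hadj (k + 1) (by omega)
  have h₃ := hadj (k + 2) (by omega)
  have h₄ := hadj (k + 3) (by omega)
  have hne₂ : p.getVert k ≠ p.getVert (k + 2) :=
    fun e => hsep (m := k) (by omega) (e ▸ h₃.symm) h₄
  have hne₄ : p.getVert k ≠ p.getVert (k + 4) :=
    fun e => hsep (m := k) (by omega) h₁.symm (e ▸ h₁.symm)
  have hne₆ : p.getVert k ≠ p.getVert (k + 6) :=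
    fun e => hsep (m := k + 2) (by omega) h₂ (e ▸ h₁.symm)
  have hne₂₄ : p.getVert (k + 2) ≠ p.getVert (k + 4) :=
    fun e => hsep (m := k) (by omega) h₁.symm (e ▸ h₂)
  have hne₂₆ : p.getVert (k + 2) ≠ p.getVert (k + 6) :=
    fun e => hsep (m := k + 2) (by omega) h₃.symm (e ▸ h₃.symm)
  have hne₄₆ : p.getVert (k + 4) ≠ p.getVert (k + 6) :=
    fun e => hsep (m := k + 2) (by omega) h₃.symm (e ▸ h₄)
  rw [Function.injective_iff_pairwise_ne]
  intro i j hij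
  fin_cases i <;> fin_cases j <;>
    simp_all [Function.onFun, hne₂.symm, hne₄.symm, hne₆.symm, hne₂₄.symm, hne₂₆.symm, hne₄₆.symm]

lemma isLongCycle (h : IsShortestNeg p) (hlen : 8 ≤ p.length) (C : Γ.G.Coloring Bool)
    (hu : C u = true) : ∃ a b, IsLongCycle (Γ.biadjMatrix C) a b := by
  have hsep : ∀ k ≤ 3, ∀ w, Γ.sign w (p.getVert k) = 0 ∨ Γ.sign w (p.getVert (k + 4)) = 0 :=
    fun k hk w => or_iff_not_imp_left.2 fun h0 => Γ.sign_nonedge _ _ <|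
      h.not_adj_getVert_add_four hlen (by omega) (adj_of_sign_ne_zero h0)
  refine ⟨fun k => ⟨p.getVert (0 + 2 * k),
      (coloring_getVert_eq_true_iff C hu (by omega)).2 (by simp)⟩,
    fun k => ⟨p.getVert (1 + 2 * k), fun hc => ?_⟩, ?_, ?_, ?_, ?_⟩
  · rw [coloring_getVert_eq_true_iff C hu (by omega)] at hc
    grind
  · exact fun i j hij => h.getVert_injective hlen zero_le_one (congrArg Subtype.val hij)
  · exact fun i j hij => h.getVert_injective hlen le_rfl (congrArg Subtype.val hij)
  · intro i k
    fin_cases k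
    · exact hsep 1 (by norm_num) i
    · exact hsep 3 (by norm_num) i
    · exact (hsep 1 (by norm_num) i).symm
    · exact (hsep 3 (by norm_num) i).symm
  · intro j k
    simp only [biadjMatrix_apply, Γ.sign_symm _ j]
    fin_cases k
    · exact hsep 0 (by norm_num) j
    · exact hsep 2 (by norm_num) j
    · exact (hsep 0 (by norm_num) j).symm
    · exact (hsep 2 (by norm_num) j).symm

end IsShortestNeg

lemma exists_isNegHexagon (C : Γ.G.Coloring Bool)
    (h4 : ∀ u v w t, Γ.sign u v * Γ.sign v w * Γ.sign w t * Γ.sign t u ≠ -1) {u : V}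
    {p : Γ.G.Walk u u} (hp : Γ.walkSign p = -1) (hlen : p.length = 6) (hu : C u = true) :
    ∃ a b, IsNegHexagon (Γ.biadjMatrix C) a b := by
  have hC : ∀ k ≤ 6, (C (p.getVert k) = true ↔ Even k) := fun k hk =>
    coloring_getVert_eq_true_iff C hu (hk.trans hlen.ge)
  refine ⟨![⟨p.getVert 0, (hC 0 (by norm_num)).2 (by decide)⟩,
      ⟨p.getVert 2, (hC 2 (by norm_num)).2 (by decide)⟩,
      ⟨p.getVert 4, (hC 4 (by norm_num)).2 (by decide)⟩],
    ![⟨p.getVert 3, (hC 3 (by norm_num)).not.2 (by decide)⟩,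
      ⟨p.getVert 5, (hC 5 (by norm_num)).not.2 (by decide)⟩,
      ⟨p.getVert 1, (hC 1 (by norm_num)).not.2 (by decide)⟩],
    (Γ.isSignMatrix_biadjMatrix C).isNegHexagon (fun i i' j j' => ?_) ?_⟩
  · have := h4 i j i' j'
    rwa [Γ.sign_symm j i', Γ.sign_symm j' i] at this
  · have hend : p.getVert 6 = p.getVert 0 := by
      rw [← hlen, p.getVert_length, p.getVert_zero]
    rw [walkSign_eq_prod_range, hlen] at hp
    simp only [prod_range_succ, prod_range_zero, one_mul, Nat.reduceAdd, hend] at hp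
    rw [← hp, Fin.prod_univ_three]
    simp only [biadjMatrix_apply, Fin.reduceAdd, Matrix.cons_val]
    rw [Γ.sign_symm (p.getVert 1) (p.getVert 2), Γ.sign_symm (p.getVert 3) (p.getVert 4),
      Γ.sign_symm (p.getVert 5) (p.getVert 0)]
    ring

lemma Unbalanced.exists_isNegHexagon_or_isLongCycle (hU : Γ.Unbalanced)
    (C : Γ.G.Coloring Bool)
    (hC4 : ∀ (u : V) (w : Γ.G.Walk u u), Γ.IsNegCycle w → w.length ≠ 4) :
    (∃ a b, IsNegHexagon (Γ.biadjMatrix C) a b) ∨ ∃ a b, IsLongCycle (Γ.biadjMatrix C) a b := by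
  have h4 := Γ.sign_quad_ne_neg_one hC4
  obtain ⟨u, p, hp, hu⟩ := hU.exists_isShortestNeg C
  have heven : Even p.length := (C.even_length_iff_congr p).2 Iff.rfl
  have hlong : 4 < p.length := not_le.1 fun hle =>
    Γ.walkSign_ne_neg_one_of_length_le_four h4 p hle heven hp.walkSign_eq
  obtain hlen | hlen : p.length = 6 ∨ 8 ≤ p.length := by grind
  · exact .inl (exists_isNegHexagon C h4 hp.walkSign_eq hlen hu)
  · exact .inr (hp.isLongCycle hlen C hu)

end SignedGraph

/-! ### Switching and eigenvectors -/

namespace SignedGraph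

variable {V : Type*}

/-- Switching with respect to the set of vertices `v` with `ε v = -1`. -/
abbrev switch (Γ : SignedGraph V) (ε : V → ℝ) (hε : ∀ v, ε v = 1 ∨ ε v = -1) : SignedGraph V where
  G := Γ.G
  sign u v := ε u * Γ.sign u v * ε v
  sign_symm u v := by rw [Γ.sign_symm]; ring
  sign_edge u v h := by
    rcases hε u with hu | hu <;> rcases hε v with hv | hv <;>
    rcases Γ.sign_edge u v h with h | h <;> simp [hu, hv, h]
  sign_nonedge u v h := by simp [Γ.sign_nonedge u v h]

variable {Γ : SignedGraph V} {ε : V → ℝ} (hε : ∀ v, ε v = 1 ∨ ε v = -1)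

lemma walkSign_switch {u v : V} (p : Γ.G.Walk u v) :
    (Γ.switch ε hε).walkSign p = ε u * Γ.walkSign p * ε v := by
  induction p with
  | @nil u => rcases hε u with h | h <;> simp [h, walkSign]
  | @cons u v w h p ih =>
    rw [walkSign_cons, ih, walkSign_cons]
    rcases hε v with hv | hv <;> simp [hv, mul_assoc]

lemma walkSign_switch_self {u : V} (p : Γ.G.Walk u u) :
    (Γ.switch ε hε).walkSign p = Γ.walkSign p := by
  rw [walkSign_switch]
  rcases hε u with h | h <;> simp [h]

lemma isNegCycle_switch_iff {u : V} (p : Γ.G.Walk u u) :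
    (Γ.switch ε hε).IsNegCycle p ↔ Γ.IsNegCycle p :=
  and_congr_right' <| by rw [← walkSign, ← walkSign, walkSign_switch_self]

lemma Unbalanced.switch (hU : Γ.Unbalanced) : (Γ.switch ε hε).Unbalanced := by
  obtain ⟨u, p, hp⟩ := hU
  exact ⟨u, p, (isNegCycle_switch_iff hε p).2 hp⟩

lemma Unbalanced.exists_biadjMatrix_eq_neg_one (hU : Γ.Unbalanced) (C : Γ.G.Coloring Bool) :
    ∃ i j, Γ.biadjMatrix C i j = -1 := by
  by_contra! hne
  have hsign : ∀ u v, Γ.G.Adj u v → Γ.sign u v = 1 := fun u v h => by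
    refine (Γ.sign_edge u v h).resolve_right fun hneg => ?_
    by_cases hu : C u = true
    · exact hne ⟨u, hu⟩ ⟨v, fun hv => C.valid h (hu.trans hv.symm)⟩ hneg
    · refine hne ⟨v, by simpa [hu] using C.valid h⟩ ⟨u, hu⟩ ?_
      rwa [biadjMatrix_apply, Γ.sign_symm]
  have hwalk : ∀ {u v : V} (p : Γ.G.Walk u v), Γ.walkSign p = 1 := fun p => by
    induction p with
    | nil => simp
    | cons h p ih => simp [hsign _ _ h, ih]
  obtain ⟨u, p, -, hp⟩ := hU
  exact absurd (hp.symm.trans (hwalk p)) (by norm_num)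

lemma sign_eq_zero_of_coloring_eq (C : Γ.G.Coloring Bool) {u v : V} (h : C u = C v) :
    Γ.sign u v = 0 :=
  Γ.sign_nonedge u v fun huv => C.valid huv h

lemma adjMatrix_submatrix_sumCompl (C : Γ.G.Coloring Bool) :
    Γ.adjMatrix.submatrix (Equiv.sumCompl (C · = true)) (Equiv.sumCompl (C · = true)) =
      fromBlocks 0 (Γ.biadjMatrix C) (Γ.biadjMatrix C)ᵀ 0 := by
  ext (i | i) (j | j)
  · exact sign_eq_zero_of_coloring_eq C (i.2.trans j.2.symm)
  · rfl
  · exact Γ.sign_symm i j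
  · exact sign_eq_zero_of_coloring_eq C
      ((Bool.eq_false_iff.2 i.2).trans (Bool.eq_false_iff.2 j.2).symm)

variable [Fintype V] {z : V → ℝ} {μ : ℝ}

lemma switch_adjMatrix_mulVec_mul (z : V → ℝ) :
    (Γ.switch ε hε).adjMatrix *ᵥ (ε * z) = ε * (Γ.adjMatrix *ᵥ z) := by
  ext u
  simp only [mulVec, dotProduct, Pi.mul_apply, mul_sum]
  refine sum_congr rfl fun v _ => ?_
  rcases hε v with h | h <;> simp [adjMatrix, h, mul_assoc]

lemma exists_eigenvector_neg (C : Γ.G.Coloring Bool) (hz : z ≠ 0)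
    (h : Γ.adjMatrix *ᵥ z = μ • z) : ∃ z', z' ≠ 0 ∧ Γ.adjMatrix *ᵥ z' = -μ • z' := by
  set κ : V → ℝ := fun v => if C v = true then 1 else -1 with hκ
  have hκ_sign : ∀ v, κ v = 1 ∨ κ v = -1 := fun v => by by_cases hv : C v <;> simp [hκ, hv]
  have hswitch : (Γ.switch κ hκ_sign).adjMatrix = -Γ.adjMatrix := by
    ext u v
    by_cases huv : C u = C v
    · simp [adjMatrix, sign_eq_zero_of_coloring_eq C huv]
    · cases hu : C u <;> cases hv : C v <;> simp_all [adjMatrix]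
  refine ⟨κ * z, fun h0 => hz (funext fun v => ?_), ?_⟩
  · have := congrFun h0 v
    rcases hκ_sign v with hv | hv <;> simpa [hv] using this
  · have := switch_adjMatrix_mulVec_mul (Γ := Γ) hκ_sign z
    rw [hswitch, neg_mulVec, h, mul_smul_comm] at this
    rw [neg_smul, ← this, neg_neg]

lemma exists_nonneg_eigenvector_switch (hz : z ≠ 0) (h : Γ.adjMatrix *ᵥ z = μ • z) :
    ∃ (ε : V → ℝ) (hε : ∀ v, ε v = 1 ∨ ε v = -1) (z' : V → ℝ), 0 ≤ z' ∧ z' ≠ 0 ∧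
      (Γ.switch ε hε).adjMatrix *ᵥ z' = μ • z' := by
  set ε : V → ℝ := fun v => if 0 ≤ z v then 1 else -1 with hε
  have hε_sign : ∀ v, ε v = 1 ∨ ε v = -1 := fun v => by by_cases hv : 0 ≤ z v <;> simp [hε, hv]
  have habs : ε * z = |z| := by
    ext v
    by_cases hv : 0 ≤ z v
    · simp [hε, hv, abs_of_nonneg]
    · simp [hε, hv, abs_of_neg (not_le.1 hv)]
  refine ⟨ε, hε_sign, |z|, abs_nonneg z, mt (Pi.abs_eq_zero z).1 hz, ?_⟩
  rw [← habs, switch_adjMatrix_mulVec_mul, h, mul_smul_comm]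

lemma biadjMatrix_mulVec_and_vecMul (C : Γ.G.Coloring Bool) (h : Γ.adjMatrix *ᵥ z = μ • z) :
    (Γ.biadjMatrix C *ᵥ fun j : {v // ¬ C v = true} => z j) =
        μ • (fun i : {v // C v = true} => z i) ∧
      (fun i : {v // C v = true} => z i) ᵥ* Γ.biadjMatrix C =
        μ • fun j : {v // ¬ C v = true} => z j := by
  have hblock : fromBlocks 0 (Γ.biadjMatrix C) (Γ.biadjMatrix C)ᵀ 0 *ᵥ
      (z ∘ Equiv.sumCompl (C · = true)) = μ • z ∘ Equiv.sumCompl (C · = true) := by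
    rw [← adjMatrix_submatrix_sumCompl, submatrix_mulVec_equiv, Function.comp_assoc,
      Equiv.self_comp_symm, Function.comp_id, h, Pi.smul_comp]
  rw [fromBlocks_mulVec, zero_mulVec, zero_mulVec, zero_add, add_zero, mulVec_transpose] at hblock
  exact ⟨congrArg (· ∘ Sum.inl) hblock, congrArg (· ∘ Sum.inr) hblock⟩

lemma isNonnegSingularPair_biadjMatrix (C : Γ.G.Coloring Bool) (hμ : μ ≠ 0) (hz0 : 0 ≤ z)
    (hz : z ≠ 0) (h : Γ.adjMatrix *ᵥ z = μ • z) :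
    IsNonnegSingularPair (Γ.biadjMatrix C) μ (fun i => z i) fun j => z j := by
  obtain ⟨hright, hleft⟩ := biadjMatrix_mulVec_and_vecMul C h
  have hne : (fun i : {v // C v = true} => z i) = 0 →
      (fun j : {v // ¬ C v = true} => z j) ≠ 0 := fun hx hy => hz <| funext fun v => by
    by_cases hv : C v = true
    · exact congrFun hx ⟨v, hv⟩
    · exact congrFun hy ⟨v, hv⟩
  refine ⟨hright, hleft, fun i => hz0 i, fun j => hz0 j, fun hx => hne hx ?_, fun hy => hne ?_ hy⟩
  · rwa [hx, zero_vecMul, eq_comm, smul_eq_zero_iff_right hμ] at hleft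
  · rwa [hy, mulVec_zero, eq_comm, smul_eq_zero_iff_right hμ] at hright

end SignedGraph

/-! ### The graphs `Γ_{r,s}` -/

lemma exists_equiv_apply_eq_and_apply_eq {α β : Type*} (f : α ≃ β) {a a' : α} {b b' : β}
    (ha : a ≠ a') (hb : b ≠ b') : ∃ g : α ≃ β, g a = b ∧ g a' = b' := by
  classical
  set g := f.trans (Equiv.swap (f a) b) with hg
  have hga : g a = b := by simp [hg]
  refine ⟨g.trans (Equiv.swap (g a') b'), ?_, by simp⟩
  rw [Equiv.trans_apply, hga, Equiv.swap_apply_of_ne_of_ne (hga ▸ g.injective.ne ha) hb]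

lemma gammaBlock_apply_apply {I J I' J' : Type*} [DecidableEq I] [DecidableEq J] [DecidableEq I']
    [DecidableEq J'] (f : I ≃ I') (g : J ≃ J') (α α' i : I) (β β' j : J) :
    gammaBlock (f α) (f α') (g β) (g β') (f i) (g j) = gammaBlock α α' β β' i j := by
  simp [gammaBlock, vecMulVec_apply, Pi.single_apply]

section gammaMatrix

variable {r s : ℕ}

lemma gammaSign_eq_gammaBlock (hr : 2 ≤ r) (hs : 2 ≤ s) (i : Fin r) (j : Fin s) :
    gammaSign r s i j =
      gammaBlock ⟨r - 1, by omega⟩ ⟨0, by omega⟩ ⟨s - 1, by omega⟩ ⟨0, by omega⟩ i j := by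
  rw [gammaBlock_apply (Fin.ne_of_val_ne (by dsimp only; lia)) (Fin.ne_of_val_ne (by lia))]
  simp only [gammaSign, Fin.ext_iff]
  grind

lemma gammaMatrix_eq_fromBlocks (r s : ℕ) :
    gammaMatrix r s = fromBlocks 0 (.of (gammaSign r s)) (.of (gammaSign r s))ᵀ 0 := by
  ext (i | i) (j | j) <;> rfl

lemma exists_gammaMatrix_eigenvector (hr : 3 ≤ r) (hs : 3 ≤ s) :
    ∃ w ≠ 0, gammaMatrix r s *ᵥ w = gammaIndex r s • w := by
  obtain ⟨x, y, hy, hxy, hyx⟩ := exists_gammaBlock_singular (α := (⟨r - 1, by omega⟩ : Fin r))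
    (α' := ⟨0, by omega⟩) (β := (⟨s - 1, by omega⟩ : Fin s)) (β' := ⟨0, by omega⟩)
    (Fin.ne_of_val_ne (by dsimp only; lia)) (Fin.ne_of_val_ne (by lia)) (by simpa) (by simpa)
  refine ⟨Sum.elim x y, fun h => hy (congrArg (· ∘ Sum.inr) h), ?_⟩
  have hblock : Matrix.of (gammaSign r s) = gammaBlock _ _ _ _ :=
    Matrix.ext (gammaSign_eq_gammaBlock (by omega) (by omega))
  simp only [Fintype.card_fin] at hxy hyx
  rw [gammaMatrix_eq_fromBlocks, hblock, fromBlocks_mulVec]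
  simp only [Sum.elim_comp_inl, Sum.elim_comp_inr, zero_mulVec, zero_add, add_zero,
    mulVec_transpose, hxy, hyx]
  exact (Sum.comp_elim (gammaIndex r s • ·) x y).symm

end gammaMatrix

namespace SignedGraph

variable {V : Type*} {Γ : SignedGraph V} {r s : ℕ}

/-- `Γ` is switching isomorphic to `Γ_{r,s}`, the switching being with respect to the set of
vertices `v` with `ε v = -1`. -/
def SwitchingIsoGamma (Γ : SignedGraph V) (r s : ℕ) : Prop :=
  ∃ (e : V ≃ Fin r ⊕ Fin s) (ε : V → ℝ), (∀ v, ε v = 1 ∨ ε v = -1) ∧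
    ∀ a b, Γ.sign a b = ε a * gammaMatrix r s (e a) (e b) * ε b

lemma SwitchingIsoGamma.of_switch {ε : V → ℝ} {hε : ∀ v, ε v = 1 ∨ ε v = -1}
    (h : (Γ.switch ε hε).SwitchingIsoGamma r s) : Γ.SwitchingIsoGamma r s := by
  obtain ⟨e, δ, hδ, h⟩ := h
  refine ⟨e, ε * δ, fun v => ?_, fun a b => ?_⟩
  · rcases hε v with h | h <;> rcases hδ v with h' | h' <;> simp [h, h']
  · have hsq : ∀ v, ε v * ε v = 1 := fun v => by rcases hε v with h | h <;> simp [h]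
    have hab : ε a * Γ.sign a b * ε b = _ := h a b
    simp only [Pi.mul_apply]
    linear_combination ε a * ε b * hab - Γ.sign a b * ε b * ε b * hsq a - Γ.sign a b * hsq b

lemma SwitchingIsoGamma.exists_eigenvector [Fintype V] (h : Γ.SwitchingIsoGamma r s)
    (hr : 3 ≤ r) (hs : 3 ≤ s) : ∃ z ≠ 0, Γ.adjMatrix *ᵥ z = gammaIndex r s • z := by
  obtain ⟨e, ε, hε, h⟩ := h
  obtain ⟨w, hw, hAw⟩ := exists_gammaMatrix_eigenvector hr hs
  have hsq : ∀ v, ε v * ε v = 1 := fun v => by rcases hε v with h | h <;> simp [h]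
  refine ⟨ε * w ∘ e, fun h0 => hw (funext fun a => ?_), ?_⟩
  · have := congrFun h0 (e.symm a)
    rcases hε (e.symm a) with h1 | h1 <;> simpa [h1] using this
  · ext u
    have hAwu : ∑ v, gammaMatrix r s (e u) (e v) * w (e v) = gammaIndex r s * w (e u) := by
      rw [e.sum_comp fun b => gammaMatrix r s (e u) b * w b]
      exact congrFun hAw (e u)
    calc ∑ v, Γ.sign u v * (ε v * w (e v))
        = ∑ v, ε u * (gammaMatrix r s (e u) (e v) * w (e v)) :=
          sum_congr rfl fun v _ => by
            rw [h]
            linear_combination ε u * gammaMatrix r s (e u) (e v) * w (e v) * hsq v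
      _ = gammaIndex r s * (ε u * w (e u)) := by rw [← mul_sum, hAwu, mul_left_comm]

lemma switchingIsoGamma_of_isGammaBlock [Fintype V] [DecidableEq V] (C : Γ.G.Coloring Bool)
    (hr : Fintype.card {v // C v = true} = r) (hs : Fintype.card {v // ¬ C v = true} = s)
    (h : IsGammaBlock (Γ.biadjMatrix C)) : Γ.SwitchingIsoGamma r s := by
  obtain ⟨α, α', β, β', hα, hβ, ε, δ, hε, hδ, hN⟩ := h
  have hr2 : 2 ≤ r := hr ▸ Fintype.one_lt_card_iff.2 ⟨α, α', hα⟩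
  have hs2 : 2 ≤ s := hs ▸ Fintype.one_lt_card_iff.2 ⟨β, β', hβ⟩
  obtain ⟨f, hfα, hfα'⟩ := exists_equiv_apply_eq_and_apply_eq (Fintype.equivFinOfCardEq hr) hα
    (b := ⟨r - 1, by omega⟩) (b' := ⟨0, by omega⟩) (Fin.ne_of_val_ne (by dsimp only; lia))
  obtain ⟨g, hgβ, hgβ'⟩ := exists_equiv_apply_eq_and_apply_eq (Fintype.equivFinOfCardEq hs) hβ
    (b := ⟨s - 1, by omega⟩) (b' := ⟨0, by omega⟩) (Fin.ne_of_val_ne (by dsimp only; lia))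
  have hsign : ∀ i j, Γ.biadjMatrix C i j = ε i * gammaSign r s (f i) (g j) * δ j := fun i j => by
    rw [hN, gammaSign_eq_gammaBlock hr2 hs2, ← hfα, ← hfα', ← hgβ, ← hgβ', gammaBlock_apply_apply]
  set e := Equiv.sumCompl (C · = true)
  have hblock : ∀ x y, Γ.sign (e x) (e y) = Sum.elim ε δ x *
      gammaMatrix r s (Equiv.sumCongr f g x) (Equiv.sumCongr f g y) * Sum.elim ε δ y := by
    intro x y
    refine (congrFun₂ (adjMatrix_submatrix_sumCompl C) x y).trans ?_
    rw [gammaMatrix_eq_fromBlocks]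
    rcases x with i | i <;> rcases y with j | j
    · simp
    · exact hsign i j
    · simpa [mul_comm, mul_left_comm] using hsign j i
    · simp
  refine ⟨e.symm.trans (Equiv.sumCongr f g), Sum.elim ε δ ∘ e.symm, fun v => ?_, fun a b => ?_⟩
  · rcases h : e.symm v with i | j <;> simp [h, hε, hδ]
  · simpa using hblock (e.symm a) (e.symm b)

end SignedGraph

/-! ### The spectral bound -/

namespace SignedGraph

variable {V : Type*} [Fintype V] {Γ : SignedGraph V} {μ : ℝ}

lemma Unbalanced.three_le_card (hU : Γ.Unbalanced) (C : Γ.G.Coloring Bool)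
    (hC4 : ∀ (u : V) (w : Γ.G.Walk u u), Γ.IsNegCycle w → w.length ≠ 4) :
    3 ≤ Fintype.card {v // C v = true} ∧ 3 ≤ Fintype.card {v // ¬ C v = true} := by
  obtain ⟨a, b, h⟩ | ⟨a, b, h⟩ := hU.exists_isNegHexagon_or_isLongCycle C hC4
  · exact ⟨h.three_le_card_left, h.three_le_card_right⟩
  · exact ⟨by linarith [h.four_le_card_left], by linarith [h.transpose.four_le_card_left]⟩

lemma Unbalanced.singularPair_lt_or_isGammaBlock [DecidableEq V] (hU : Γ.Unbalanced)
    (C : Γ.G.Coloring Bool) (hC4 : ∀ (u : V) (w : Γ.G.Walk u u), Γ.IsNegCycle w → w.length ≠ 4)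
    {x : {v // C v = true} → ℝ} {y : {v // ¬ C v = true} → ℝ} (hμ : 0 ≤ μ)
    (hxy : IsNonnegSingularPair (Γ.biadjMatrix C) μ x y) :
    μ < gammaIndex (Fintype.card {v // C v = true}) (Fintype.card {v // ¬ C v = true}) ∨
      μ = gammaIndex (Fintype.card {v // C v = true}) (Fintype.card {v // ¬ C v = true}) ∧
        IsGammaBlock (Γ.biadjMatrix C) := by
  have hN := Γ.isSignMatrix_biadjMatrix C
  obtain ⟨a, b, h⟩ | ⟨a, b, h⟩ := hU.exists_isNegHexagon_or_isLongCycle C hC4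
  · refine (h.le_gammaIndex hN hxy).lt_or_eq.imp_right fun heq => ⟨heq, ?_⟩
    exact h.isGammaBlock_of_gammaIndex hN (heq ▸ hxy)
  · obtain ⟨i, j, hneg⟩ := hU.exists_biadjMatrix_eq_neg_one C
    exact .inl (h.lt_gammaIndex hN hneg hμ hxy)

variable {r s : ℕ}

theorem Unbalanced.abs_lt_gammaIndex_or (hU : Γ.Unbalanced) (C : Γ.G.Coloring Bool)
    (hC4 : ∀ (u : V) (w : Γ.G.Walk u u), Γ.IsNegCycle w → w.length ≠ 4)
    (hr : Fintype.card {v // C v = true} = r) (hs : Fintype.card {v // ¬ C v = true} = s)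
    {z : V → ℝ} (hz : z ≠ 0) (h : Γ.adjMatrix *ᵥ z = μ • z) :
    |μ| < gammaIndex r s ∨ |μ| = gammaIndex r s ∧ Γ.SwitchingIsoGamma r s := by
  classical
  wlog hμ : 0 < μ generalizing μ z
  · obtain hμ | rfl := (not_lt.1 hμ).lt_or_eq
    · obtain ⟨z', hz', h'⟩ := exists_eigenvector_neg C hz h
      simpa only [abs_neg] using this hz' h' (neg_pos.2 hμ)
    · obtain ⟨hr3, hs3⟩ := hU.three_le_card C hC4
      rw [hr] at hr3
      rw [hs] at hs3
      exact .inl (by simpa using gammaIndex_pos (mod_cast hr3) (mod_cast hs3))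
  obtain ⟨ε, hε, z', hz'0, hz', h'⟩ := exists_nonneg_eigenvector_switch hz h
  have hxy := isNonnegSingularPair_biadjMatrix (Γ := Γ.switch ε hε) C hμ.ne' hz'0 hz' h'
  have hkey := (hU.switch hε).singularPair_lt_or_isGammaBlock C
    (fun u w hw => hC4 u w ((isNegCycle_switch_iff (Γ := Γ) hε w).1 hw)) hμ.le hxy
  rw [hr, hs] at hkey
  rw [abs_of_pos hμ]
  exact hkey.imp_right <| And.imp_right fun hblock =>
    (switchingIsoGamma_of_isGammaBlock (Γ := Γ.switch ε hε) C hr hs hblock).of_switch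

end SignedGraph

lemma exists_eigenvalues_eq_of_mulVec_eq {V : Type*} [Fintype V] [DecidableEq V]
    {A : Matrix V V ℝ} (hA : A.IsHermitian) {μ : ℝ} {z : V → ℝ} (hz : z ≠ 0)
    (h : A *ᵥ z = μ • z) : ∃ i, hA.eigenvalues i = μ := by
  have hμ : Module.End.HasEigenvalue (toLin' A) μ :=
    Module.End.hasEigenvalue_of_hasEigenvector
      ⟨Module.End.mem_eigenspace_iff.2 ((toLin'_apply A z).trans h), hz⟩
  have hspec := hμ.mem_spectrum
  rwa [spectrum_toLin', hA.spectrum_real_eq_range_eigenvalues] at hspec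

theorem spectral_turan_bipartite_general {V : Type*} [Fintype V] [DecidableEq V] [Nonempty V]
    (Γ : SignedGraph V) (r s : ℕ) (c : V → Bool) (hc : ∀ u v, Γ.G.Adj u v → c u ≠ c v)
    (hcr : #{v | c v = true} = r) (hcs : #{v | c v = false} = s) (hU : Γ.Unbalanced)
    (hC4 : ∀ (u : V) (w : Γ.G.Walk u u), Γ.IsNegCycle w → w.length ≠ 4)
    (hA : Γ.adjMatrix.IsHermitian) :
    univ.sup' univ_nonempty (fun i => |hA.eigenvalues i|) ≤ gammaIndex r s ∧
      (univ.sup' univ_nonempty (fun i => |hA.eigenvalues i|) = gammaIndex r s ↔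
        Γ.SwitchingIsoGamma r s) := by
  set C : Γ.G.Coloring Bool := .mk c fun h => hc _ _ h
  have hr : Fintype.card {v // C v = true} = r := (Fintype.card_subtype _).trans hcr
  have hs : Fintype.card {v // ¬ C v = true} = s := by
    simpa only [Fintype.card_subtype, Bool.not_eq_true] using show #{v | C v = false} = s from hcs
  have hmain : ∀ i, |hA.eigenvalues i| < gammaIndex r s ∨
      |hA.eigenvalues i| = gammaIndex r s ∧ Γ.SwitchingIsoGamma r s := fun i =>
    hU.abs_lt_gammaIndex_or C hC4 hr hs
      (by simpa using hA.eigenvectorBasis.orthonormal.ne_zero i) (hA.mulVec_eigenvectorBasis i)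
  have hle : univ.sup' univ_nonempty (fun i => |hA.eigenvalues i|) ≤ gammaIndex r s :=
    sup'_le _ _ fun i _ => (hmain i).elim le_of_lt fun h => h.1.le
  refine ⟨hle, fun heq => ?_, fun hiso => hle.antisymm ?_⟩
  · obtain ⟨i, -, hi⟩ := exists_mem_eq_sup' univ_nonempty fun i => |hA.eigenvalues i|
    exact ((hmain i).resolve_left (hi.symm.trans heq).not_lt).2
  · obtain ⟨hr3, hs3⟩ := hU.three_le_card C hC4
    obtain ⟨z, hz, h⟩ := hiso.exists_eigenvector (hr ▸ hr3) (hs ▸ hs3)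
    obtain ⟨i, hi⟩ := exists_eigenvalues_eq_of_mulVec_eq hA hz h
    rw [← hi]
    exact (le_abs_self _).trans (le_sup' (fun i => |hA.eigenvalues i|) (mem_univ i))

/-- Spectral Turán theorem: an unbalanced signed `r` by `s` bipartite graph (`3 ≤ r ≤ s`)
with no negative 4-cycle has spectral radius at most `f(r,s)`, with equality iff it is
switching isomorphic to `Γ_{r,s}`. -/
theorem spectral_turan_bipartite {V : Type*} [Fintype V] [DecidableEq V] [Nonempty V]
    (Γ : SignedGraph V) (r s : ℕ) (hr : 3 ≤ r) (hrs : r ≤ s)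
    (c : V → Bool) (hc : ∀ u v, Γ.G.Adj u v → c u ≠ c v)
    (hcr : (Finset.univ.filter fun v => c v = true).card = r)
    (hcs : (Finset.univ.filter fun v => c v = false).card = s)
    (hU : Γ.Unbalanced)
    (hC4 : ∀ (u : V) (w : Γ.G.Walk u u), Γ.IsNegCycle w → w.length ≠ 4)
    (hA : Γ.adjMatrix.IsHermitian) :
    Finset.univ.sup' Finset.univ_nonempty (fun i => |hA.eigenvalues i|) ≤
      Real.sqrt (((((r : ℝ) - 1) * ((s : ℝ) - 1) + 2) + Real.sqrt ((((r : ℝ) - 1) * ((s : ℝ) - 1) + 2) ^ 2 - 4 * (2 * (r : ℝ) - 3) * (2 * (s : ℝ) - 3))) / 2) ∧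
    (Finset.univ.sup' Finset.univ_nonempty (fun i => |hA.eigenvalues i|) =
      Real.sqrt (((((r : ℝ) - 1) * ((s : ℝ) - 1) + 2) + Real.sqrt ((((r : ℝ) - 1) * ((s : ℝ) - 1) + 2) ^ 2 - 4 * (2 * (r : ℝ) - 3) * (2 * (s : ℝ) - 3))) / 2) ↔
      ∃ (e : V ≃ (Fin r ⊕ Fin s)) (ε : V → ℝ), (∀ v, ε v = 1 ∨ ε v = -1) ∧
        ∀ a b, Γ.sign a b = ε a * gammaMatrix r s (e a) (e b) * ε b) :=
  spectral_turan_bipartite_general Γ r s c hc hcr hcs hU hC4 hA
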